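/- arXiv:1708.03924 — 5 statements merged into one kernel-verified Lean document; each statement's English description precedes it below -/
import Mathlib

section
/- Let g be a continuous complex-valued function on the closed unit disk with sup_{z∈𝔻}|g(z)| ≤ M₁, and let G_g(z) = (1/(2π))∫_𝔻 G(z,w) g(w) dA(w). Then for every z ∈ 𝔻 \ {0}: |∂G_g/∂z (z) − ∂G_g/∂z (0)| ≤ M₁·[log(4(1+|z|)) − log|z|]·|z|(2+|z|), and the same bound holds for |∂G_g/∂z̄ (z) − ∂G_g/∂z̄ (0)|. -/
/-!
For two points `z ≠ z'` of the disk, the difference `∂G/∂z(z, w) - ∂G/∂z(z', w)` and the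
first-order Taylor remainder of `G(·, w)` between `z` and `z'` are controlled by the two-pole
kernel `1 / (|z - w| |z' - w|)`, with factors `|z - z'|` and `4 |z - z'|²`; the regular part of `G`
obeys the same estimates as the singular one because `|z - w| ≤ |1 - z w̄|`. A truncated AM-GM
inequality replaces the two-pole kernel by radial kernels about `z` and `z'`, and polar coordinates
then bound its integral by `2π (1 + log (6 / |z - z'|))`. Since `r² (1 + log (6 / r)) = o(r)`, the
Taylor estimate justifies differentiating the potential under the integral sign, and the kernel
difference gives the log-Lipschitz bound `M |z - z'| (1 + log (6 / |z - z'|))` for its derivatives.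
As `G` is real, `∂̄` follows from `∂` for the conjugate density.
-/

open Metric MeasureTheory Set Filter

noncomputable section

/-- The Wirtinger derivative `∂f/∂z = (f_x - i f_y)/2`. -/
def wdz (f : ℂ → ℂ) (z : ℂ) : ℂ :=
  (fderiv ℝ f z 1 - Complex.I * fderiv ℝ f z Complex.I) / 2

/-- The Wirtinger derivative `∂f/∂z̄ = (f_x + i f_y)/2`. -/
def wdzbar (f : ℂ → ℂ) (z : ℂ) : ℂ :=
  (fderiv ℝ f z 1 + Complex.I * fderiv ℝ f z Complex.I) / 2

/-- The Laplacian `Δf = f_xx + f_yy` (equivalently `4 f_{z z̄}`). -/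
def lap (f : ℂ → ℂ) (z : ℂ) : ℂ :=
  fderiv ℝ (fun w => fderiv ℝ f w 1) z 1 +
    fderiv ℝ (fun w => fderiv ℝ f w Complex.I) z Complex.I

/-- The Poisson integral `P_ψ(z) = (1/2π) ∫₀^{2π} ((1-|z|²)/|1-z e^{-it}|²) ψ(e^{it}) dt`. -/
def poissonIntegral (ψ : ℂ → ℂ) (z : ℂ) : ℂ :=
  (1 / (2 * Real.pi) : ℝ) • ∫ t in (0:ℝ)..(2 * Real.pi),
    (((1 - ‖z‖ ^ 2) / ‖1 - z * Complex.exp (-(Complex.I * (t : ℂ)))‖ ^ 2 : ℝ) : ℂ) *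
      ψ (Complex.exp (Complex.I * (t : ℂ)))

/-- The Green potential `G_g(z) = (1/2π) ∫_𝔻 log|(1 - z w̄)/(z - w)| g(w) dA(w)`. -/
def greenPotential (g : ℂ → ℂ) (z : ℂ) : ℂ :=
  (1 / (2 * Real.pi) : ℝ) • ∫ w in ball (0:ℂ) 1,
    ((Real.log ‖(1 - z * (starRingEnd ℂ) w) / (z - w)‖ : ℝ) : ℂ) * g w

/-- `sup_{z ∈ 𝔻} |g(z)|`. -/
def supD (g : ℂ → ℂ) : ℝ := sSup ((fun z => ‖g z‖) '' ball (0:ℂ) 1)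

/-- The function `μ(r)` with constant `c` in place of `‖g‖_∞`. -/
def mu (c r : ℝ) : ℝ :=
  c * (1 - r ^ 2) / (8 * r ^ 2) *
    ((1 + r ^ 2) / (1 - r ^ 2) - (1 - r ^ 2) / (2 * r) * Real.log ((1 + r) / (1 - r)))

open scoped ComplexConjugate

section RadialIntegrals

lemma setIntegral_ball_fun_norm_sub {E F : Type*} [NormedAddCommGroup E] [NormedSpace ℝ E]
    [Nontrivial E] [FiniteDimensional ℝ E] [MeasurableSpace E] [BorelSpace E]
    [NormedAddCommGroup F] [NormedSpace ℝ F] (μ : Measure E) [μ.IsAddHaarMeasure]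
    (f : ℝ → F) (x : E) (R : ℝ) :
    ∫ y in ball x R, f ‖x - y‖ ∂μ = Module.finrank ℝ E • μ.real (ball 0 1) •
      ∫ t in Ioo 0 R, t ^ (Module.finrank ℝ E - 1) • f t := by
  calc ∫ y in ball x R, f ‖x - y‖ ∂μ
      = ∫ y, (Iio R).indicator f ‖x - y‖ ∂μ := by
        rw [← integral_indicator measurableSet_ball]
        congr with y
        simp [indicator, dist_eq_norm, norm_sub_rev]
    _ = ∫ y, (Iio R).indicator f ‖y‖ ∂μ :=
        integral_sub_left_eq_self (fun y => (Iio R).indicator f ‖y‖) μ x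
    _ = _ := by
        rw [integral_fun_norm_addHaar, ← Ioi_inter_Iio, ← setIntegral_indicator measurableSet_Iio]
        simp only [indicator_smul]

lemma integrableOn_ball_inv_norm_sub (z c : ℂ) (R : ℝ) :
    IntegrableOn (fun w => ‖z - w‖⁻¹) (ball c R) := by
  have hloc : LocallyIntegrable fun w : ℂ => ‖w‖⁻¹ :=
    locallyIntegrable_of_norm_le_rpow (C := 1) (α := 1) (by simp) (by simp)
      (ae_of_all _ fun w => by simp [Real.rpow_neg_one]) (by fun_prop)
  have hsub : ball c R ⊆ (fun w => z - w) ⁻¹' closedBall 0 (R + dist c z) := fun w hw => by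
    rw [mem_preimage, mem_closedBall_zero_iff, ← dist_eq_norm, dist_comm]
    exact (dist_triangle w c z).trans (by gcongr; exact (mem_ball.1 hw).le)
  exact ((Measure.measurePreserving_sub_left volume z).integrableOn_comp_preimage
    (MeasurableEquiv.subLeft z).measurableEmbedding |>.2
      (hloc.integrableOn_isCompact (isCompact_closedBall _ _))).mono_set hsub

lemma integral_inv_max {c R : ℝ} (hc : 0 < c) (hcR : c ≤ R) :
    ∫ t in 0..R, (max t c)⁻¹ = 1 + Real.log (R / c) := by
  have hcont : Continuous fun t : ℝ => (max t c)⁻¹ :=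
    (continuous_id.max continuous_const).inv₀ fun t => (lt_max_of_lt_right hc).ne'
  have hleft : ∫ t in 0..c, (max t c)⁻¹ = 1 := by
    rw [intervalIntegral.integral_congr (g := fun _ => c⁻¹) fun t ht => ?_]
    · simp [hc.ne']
    · rw [uIcc_of_le hc.le] at ht
      simp [ht.2]
  have hright : ∫ t in c..R, (max t c)⁻¹ = Real.log (R / c) := by
    rw [← integral_inv_of_pos hc (hc.trans_le hcR)]
    refine intervalIntegral.integral_congr fun t ht => ?_
    rw [uIcc_of_le hcR] at ht
    simp [ht.1]
  rw [← intervalIntegral.integral_add_adjacent_intervals (hcont.intervalIntegrable 0 c)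
    (hcont.intervalIntegrable c R), hleft, hright]

lemma integrableOn_ball_inv_norm_mul_max (z a : ℂ) (R : ℝ) {c : ℝ} (hc : 0 < c) :
    IntegrableOn (fun w => (‖z - w‖ * max ‖z - w‖ c)⁻¹) (ball a R) := by
  refine ((integrableOn_ball_inv_norm_sub z a R).mul_const c⁻¹).mono'
    (by fun_prop) (ae_of_all _ fun w => ?_)
  rw [Real.norm_of_nonneg (by positivity), mul_inv]
  gcongr
  exact le_max_right _ _

lemma setIntegral_ball_inv_norm_mul_max (z : ℂ) {c R : ℝ} (hc : 0 < c) (hcR : c ≤ R) :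
    ∫ w in ball z R, (‖z - w‖ * max ‖z - w‖ c)⁻¹ =
      2 * Real.pi * (1 + Real.log (R / c)) := by
  rw [setIntegral_ball_fun_norm_sub volume (fun t => (t * max t c)⁻¹),
    ← integral_inv_max hc hcR, intervalIntegral.integral_of_le (hc.le.trans hcR),
    integral_Ioc_eq_integral_Ioo]
  have hcancel : EqOn (fun t : ℝ => t ^ (Module.finrank ℝ ℂ - 1) • (t * max t c)⁻¹)
      (fun t => (max t c)⁻¹) (Ioo 0 R) := fun t ht => by
    have ht0 : t ≠ 0 := ht.1.ne'
    simp only [Complex.finrank_real_complex, Nat.add_one_sub_one, pow_one, smul_eq_mul]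
    field_simp
  rw [setIntegral_congr_fun measurableSet_Ioo hcancel]
  simp [Measure.real, mul_assoc]

end RadialIntegrals

section TwoPoles

-- The weights `1/2` come from AM-GM when `d / 3 ≤ a, b`; truncating at a third of `d` makes the
-- farther point at least twice the truncation level away when the nearer one is below that level.
lemma inv_mul_le_half_add_inv_mul_max {a b d : ℝ} (ha : 0 ≤ a) (hb : 0 ≤ b) (hd : d ≤ a + b) :
    (a * b)⁻¹ ≤ ((a * max a (d / 3))⁻¹ + (b * max b (d / 3))⁻¹) / 2 := by
  wlog hab : a ≤ b generalizing a b
  · rw [mul_comm a b, add_comm (a * _)⁻¹]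
    exact this hb ha (by linarith) (le_of_not_ge hab)
  obtain rfl | ha := ha.eq_or_lt
  · rw [zero_mul, inv_zero]
    positivity
  obtain had | had := le_total (d / 3) a
  · rw [max_eq_left had, max_eq_left (had.trans hab)]
    have hamgm := two_mul_le_add_sq a⁻¹ b⁻¹
    simp only [mul_inv]
    linarith
  · have hd0 : 0 < d / 3 := ha.trans_le had
    have hfar : (a * b)⁻¹ ≤ (a * (2 * (d / 3)))⁻¹ := by gcongr; linarith
    have hsplit : (a * (2 * (d / 3)))⁻¹ = (a * (d / 3))⁻¹ / 2 := by ring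
    rw [max_eq_right had]
    have : 0 ≤ (b * max b (d / 3))⁻¹ := by positivity
    linarith

variable {c z z' : ℂ} {R : ℝ}

lemma inv_norm_mul_norm_le_half_add (z z' w : ℂ) :
    (‖z - w‖ * ‖z' - w‖)⁻¹ ≤ ((‖z - w‖ * max ‖z - w‖ (‖z - z'‖ / 3))⁻¹ +
      (‖z' - w‖ * max ‖z' - w‖ (‖z - z'‖ / 3))⁻¹) / 2 :=
  inv_mul_le_half_add_inv_mul_max (norm_nonneg _) (norm_nonneg _) <| by
    simpa using norm_sub_le (z - w) (z' - w)

lemma integrableOn_ball_inv_norm_mul_norm (hne : z ≠ z') :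
    IntegrableOn (fun w => (‖z - w‖ * ‖z' - w‖)⁻¹) (ball c R) := by
  have hd : 0 < ‖z - z'‖ / 3 := by have := norm_pos_iff.2 (sub_ne_zero.2 hne); positivity
  refine (((integrableOn_ball_inv_norm_mul_max z c R hd).add
    (integrableOn_ball_inv_norm_mul_max z' c R hd)).div_const 2).mono'
    (by fun_prop) (ae_of_all _ fun w => ?_)
  rw [Real.norm_of_nonneg (by positivity)]
  exact inv_norm_mul_norm_le_half_add z z' w

lemma setIntegral_ball_inv_norm_mul_max_le (hz : z ∈ ball c R) {r : ℝ} (hr : 0 < r)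
    (hrR : r ≤ 2 * R) :
    ∫ w in ball c R, (‖z - w‖ * max ‖z - w‖ r)⁻¹ ≤
      2 * Real.pi * (1 + Real.log (2 * R / r)) := by
  have hsub : ball c R ⊆ ball z (2 * R) :=
    ball_subset_ball' (by have := mem_ball'.1 hz; linarith)
  calc ∫ w in ball c R, (‖z - w‖ * max ‖z - w‖ r)⁻¹
      ≤ ∫ w in ball z (2 * R), (‖z - w‖ * max ‖z - w‖ r)⁻¹ :=
        setIntegral_mono_set (integrableOn_ball_inv_norm_mul_max z z _ hr)
          (ae_of_all _ fun w => by positivity) hsub.eventuallyLE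
    _ = 2 * Real.pi * (1 + Real.log (2 * R / r)) := setIntegral_ball_inv_norm_mul_max z hr hrR

lemma setIntegral_ball_inv_norm_mul_norm_le (hz : z ∈ ball c R) (hz' : z' ∈ ball c R)
    (hne : z ≠ z') :
    ∫ w in ball c R, (‖z - w‖ * ‖z' - w‖)⁻¹ ≤
      2 * Real.pi * (1 + Real.log (6 * R / ‖z - z'‖)) := by
  have hd : 0 < ‖z - z'‖ := norm_pos_iff.2 (sub_ne_zero.2 hne)
  have hdR : ‖z - z'‖ / 3 ≤ 2 * R := by
    have := dist_triangle_right z z' c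
    have := mem_ball.1 hz
    have := mem_ball.1 hz'
    rw [← dist_eq_norm] at *
    linarith
  have hi := integrableOn_ball_inv_norm_mul_max z c R (div_pos hd three_pos)
  have hi' := integrableOn_ball_inv_norm_mul_max z' c R (div_pos hd three_pos)
  have hI := setIntegral_ball_inv_norm_mul_max_le hz (div_pos hd three_pos) hdR
  have hI' := setIntegral_ball_inv_norm_mul_max_le hz' (div_pos hd three_pos) hdR
  have hmono := setIntegral_mono (integrableOn_ball_inv_norm_mul_norm hne)
    ((hi.add hi').div_const 2) (inv_norm_mul_norm_le_half_add z z')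
  have hscale : 2 * R / (‖z - z'‖ / 3) = 6 * R / ‖z - z'‖ := by ring
  have hsum := integral_add hi hi'
  rw [integral_div] at hmono
  rw [hscale] at hI hI'
  simp only [Pi.add_apply] at hmono hsum
  linarith

end TwoPoles

section Logarithm

lemma abs_log_norm_sub_re_sub_one_le {u : ℂ} (hu : u ≠ 0) :
    |Real.log ‖u‖ - (u - 1).re| ≤ 2 * ‖u - 1‖ ^ 2 / ‖u‖ := by
  have hpos : 0 < ‖u‖ := norm_pos_iff.2 hu
  have hre : |u.re| ≤ ‖u‖ := Complex.abs_re_le_norm u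
  have hsq : ‖u - 1‖ ^ 2 = ‖u‖ ^ 2 - 2 * u.re + 1 := by
    simp only [← Complex.normSq_eq_norm_sq, Complex.normSq_apply, Complex.sub_re, Complex.sub_im,
      Complex.one_re, Complex.one_im]
    ring
  have hupper := Real.log_le_sub_one_of_pos hpos
  have hlower := Real.one_sub_inv_le_log_of_pos hpos
  have hinv : ‖u‖⁻¹ * ‖u‖ = 1 := inv_mul_cancel₀ hpos.ne'
  rw [abs_le] at hre
  rw [hsq, Complex.sub_re, Complex.one_re, le_div_iff₀ hpos]
  obtain habs | habs := abs_cases (Real.log ‖u‖ - (u.re - 1)) <;> rw [habs.1]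
  · have : (Real.log ‖u‖ - (u.re - 1)) * ‖u‖ ≤ (‖u‖ - u.re) * ‖u‖ :=
      mul_le_mul_of_nonneg_right (by linarith) hpos.le
    nlinarith [sq_nonneg (‖u‖ - 1)]
  · have : -(Real.log ‖u‖ - (u.re - 1)) * ‖u‖ ≤ (u.re - 2 + ‖u‖⁻¹) * ‖u‖ :=
      mul_le_mul_of_nonneg_right (by linarith) hpos.le
    nlinarith [sq_nonneg (‖u‖ - 1)]

-- The error is `O(‖b - a‖ ^ 2)`, yet the singularity in `a` and `b` stays integrable in the plane.
lemma abs_log_norm_sub_log_norm_sub_re_le {a b : ℂ} (ha : a ≠ 0) (hb : b ≠ 0) :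
    |Real.log ‖b‖ - Real.log ‖a‖ - ((b - a) / a).re| ≤
      2 * ‖b - a‖ ^ 2 * (‖a‖ * ‖b‖)⁻¹ := by
  have h := abs_log_norm_sub_re_sub_one_le (div_ne_zero hb ha)
  have hbound : 2 * ‖(b - a) / a‖ ^ 2 / ‖b / a‖ = 2 * ‖b - a‖ ^ 2 * (‖a‖ * ‖b‖)⁻¹ := by
    have := norm_ne_zero_iff.2 ha
    rw [norm_div, norm_div]
    field_simp
  rwa [div_sub_one ha, hbound, norm_div,
    Real.log_div (norm_ne_zero_iff.2 hb) (norm_ne_zero_iff.2 ha)] at h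

lemma continuous_mul_one_add_log_div (c : ℝ) :
    Continuous fun r : ℝ => r * (1 + Real.log (c / r)) := by
  obtain rfl | hc := eq_or_ne c 0
  · simpa using continuous_id'
  have heq : (fun r : ℝ => r * (1 + Real.log (c / r))) =
      fun r => r + r * Real.log c - r * Real.log r := by
    ext r
    obtain rfl | hr := eq_or_ne r 0
    · simp
    · rw [Real.log_div hc hr]
      ring
  rw [heq]
  exact (by fun_prop : Continuous fun r : ℝ => r + r * Real.log c).sub Real.continuous_mul_log

end Logarithm

section GreenKernel

/-- The Green function `G(z, w) = log |(1 - z w̄) / (z - w)|` of the unit disk, the kernel of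
`greenPotential`. -/
def greenKernel (z w : ℂ) : ℝ := Real.log ‖(1 - z * conj w) / (z - w)‖

/-- The Wirtinger derivative `∂G/∂z` of the Green function of the unit disk in its first variable;
since `G` is real-valued, `∂G/∂z̄` is its conjugate. -/
def greenKernelDz (z w : ℂ) : ℂ := -(conj w / (1 - z * conj w) + 1 / (z - w)) / 2

variable {z z' w : ℂ}

lemma measurable_greenKernel (z : ℂ) : Measurable (greenKernel z) := by
  have := Complex.continuous_conj.measurable
  unfold greenKernel
  fun_prop

lemma measurable_greenKernelDz (z : ℂ) : Measurable (greenKernelDz z) := by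
  have := Complex.continuous_conj.measurable
  unfold greenKernelDz
  fun_prop

lemma norm_one_sub_mul_conj_sq (z w : ℂ) :
    ‖1 - z * conj w‖ ^ 2 = ‖z - w‖ ^ 2 + (1 - ‖z‖ ^ 2) * (1 - ‖w‖ ^ 2) := by
  simp only [← Complex.normSq_eq_norm_sq, Complex.normSq_apply, Complex.sub_re, Complex.sub_im,
    Complex.mul_re, Complex.mul_im, Complex.conj_re, Complex.conj_im, Complex.one_re,
    Complex.one_im]
  ring

lemma norm_sub_le_norm_one_sub_mul_conj (hz : ‖z‖ ≤ 1) (hw : ‖w‖ ≤ 1) :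
    ‖z - w‖ ≤ ‖1 - z * conj w‖ := by
  refine (sq_le_sq₀ (norm_nonneg _) (norm_nonneg _)).1 ?_
  rw [norm_one_sub_mul_conj_sq, le_add_iff_nonneg_right]
  have hz2 : ‖z‖ ^ 2 ≤ 1 := pow_le_one₀ (norm_nonneg _) hz
  have hw2 : ‖w‖ ^ 2 ≤ 1 := pow_le_one₀ (norm_nonneg _) hw
  exact mul_nonneg (sub_nonneg.2 hz2) (sub_nonneg.2 hw2)

lemma one_sub_mul_conj_ne_zero (hz : ‖z‖ ≤ 1) (hw : ‖w‖ ≤ 1) (hne : z ≠ w) :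
    1 - z * conj w ≠ 0 :=
  norm_pos_iff.1 <| (norm_pos_iff.2 (sub_ne_zero.2 hne)).trans_le
    (norm_sub_le_norm_one_sub_mul_conj hz hw)

lemma greenKernel_eq_sub (hz : ‖z‖ ≤ 1) (hw : ‖w‖ ≤ 1) (hne : z ≠ w) :
    greenKernel z w = Real.log ‖1 - z * conj w‖ - Real.log ‖z - w‖ := by
  rw [greenKernel, norm_div, Real.log_div (norm_ne_zero_iff.2 (one_sub_mul_conj_ne_zero hz hw hne))
    (norm_ne_zero_iff.2 (sub_ne_zero.2 hne))]

lemma abs_greenKernel_le (hz : ‖z‖ ≤ 1) (hw : ‖w‖ ≤ 1) (hne : z ≠ w) :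
    |greenKernel z w| ≤ 2 * ‖z - w‖⁻¹ := by
  have hpos : 0 < ‖z - w‖ := norm_pos_iff.2 (sub_ne_zero.2 hne)
  have hle := norm_sub_le_norm_one_sub_mul_conj hz hw
  have hnum : ‖1 - z * conj w‖ ≤ 2 := by
    refine (norm_sub_le _ _).trans ?_
    rw [norm_mul, RCLike.norm_conj, norm_one]
    linarith [mul_le_one₀ hz (norm_nonneg w) hw]
  rw [greenKernel, norm_div, abs_of_nonneg (Real.log_nonneg ((one_le_div hpos).2 hle))]
  calc Real.log (‖1 - z * conj w‖ / ‖z - w‖)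
      ≤ ‖1 - z * conj w‖ / ‖z - w‖ := Real.log_le_self (by positivity)
    _ ≤ 2 * ‖z - w‖⁻¹ := by rw [div_eq_mul_inv]; gcongr

lemma norm_greenKernelDz_le (hz : ‖z‖ ≤ 1) (hw : ‖w‖ ≤ 1) (hne : z ≠ w) :
    ‖greenKernelDz z w‖ ≤ ‖z - w‖⁻¹ := by
  have hpos : 0 < ‖z - w‖ := norm_pos_iff.2 (sub_ne_zero.2 hne)
  have hle := norm_sub_le_norm_one_sub_mul_conj hz hw
  have hreg : ‖conj w / (1 - z * conj w)‖ ≤ ‖z - w‖⁻¹ := by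
    rw [norm_div, RCLike.norm_conj, ← one_div]
    gcongr
  have hsing : ‖1 / (z - w)‖ = ‖z - w‖⁻¹ := by simp
  have hadd := norm_add_le (conj w / (1 - z * conj w)) (1 / (z - w))
  rw [greenKernelDz, norm_div, norm_neg, RCLike.norm_ofNat]
  linarith

lemma greenKernelDz_sub (hz : ‖z‖ ≤ 1) (hz' : ‖z'‖ ≤ 1) (hw : ‖w‖ ≤ 1) (hne : z ≠ w)
    (hne' : z' ≠ w) :
    greenKernelDz z w - greenKernelDz z' w = (z - z') / 2 *
      (1 / ((z - w) * (z' - w)) - conj w ^ 2 / ((1 - z * conj w) * (1 - z' * conj w))) := by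
  have hreg : conj w / (1 - z * conj w) - conj w / (1 - z' * conj w) =
      (z - z') * (conj w ^ 2 / ((1 - z * conj w) * (1 - z' * conj w))) := by
    rw [div_sub_div _ _ (one_sub_mul_conj_ne_zero hz hw hne)
      (one_sub_mul_conj_ne_zero hz' hw hne')]
    ring
  have hsing : 1 / (z - w) - 1 / (z' - w) = -((z - z') * (1 / ((z - w) * (z' - w)))) := by
    rw [div_sub_div _ _ (sub_ne_zero.2 hne) (sub_ne_zero.2 hne')]
    ring
  unfold greenKernelDz
  linear_combination -(hreg + hsing) / 2

lemma inv_norm_mul_norm_one_sub_mul_conj_le (hz : ‖z‖ ≤ 1) (hz' : ‖z'‖ ≤ 1) (hw : ‖w‖ ≤ 1)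
    (hne : z ≠ w) (hne' : z' ≠ w) :
    (‖1 - z * conj w‖ * ‖1 - z' * conj w‖)⁻¹ ≤ (‖z - w‖ * ‖z' - w‖)⁻¹ := by
  have hpos : 0 < ‖z - w‖ := norm_pos_iff.2 (sub_ne_zero.2 hne)
  have hpos' : 0 < ‖z' - w‖ := norm_pos_iff.2 (sub_ne_zero.2 hne')
  gcongr <;> exact norm_sub_le_norm_one_sub_mul_conj ‹_› hw

lemma norm_greenKernelDz_sub_le (hz : ‖z‖ ≤ 1) (hz' : ‖z'‖ ≤ 1) (hw : ‖w‖ ≤ 1) (hne : z ≠ w)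
    (hne' : z' ≠ w) :
    ‖greenKernelDz z w - greenKernelDz z' w‖ ≤ ‖z - z'‖ * (‖z - w‖ * ‖z' - w‖)⁻¹ := by
  have hreg : ‖conj w ^ 2 / ((1 - z * conj w) * (1 - z' * conj w))‖ ≤
      (‖z - w‖ * ‖z' - w‖)⁻¹ := by
    rw [norm_div, norm_pow, RCLike.norm_conj, norm_mul, div_eq_mul_inv]
    exact (mul_le_of_le_one_left (by positivity) (pow_le_one₀ (norm_nonneg _) hw)).trans
      (inv_norm_mul_norm_one_sub_mul_conj_le hz hz' hw hne hne')
  have hsing : ‖1 / ((z - w) * (z' - w))‖ = (‖z - w‖ * ‖z' - w‖)⁻¹ := by simp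
  rw [greenKernelDz_sub hz hz' hw hne hne', norm_mul, norm_div, RCLike.norm_ofNat]
  calc ‖z - z'‖ / 2 * ‖1 / ((z - w) * (z' - w)) -
        conj w ^ 2 / ((1 - z * conj w) * (1 - z' * conj w))‖
      ≤ ‖z - z'‖ / 2 * ((‖z - w‖ * ‖z' - w‖)⁻¹ + (‖z - w‖ * ‖z' - w‖)⁻¹) := by
        gcongr
        exact (norm_sub_le _ _).trans (add_le_add hsing.le hreg)
    _ = ‖z - z'‖ * (‖z - w‖ * ‖z' - w‖)⁻¹ := by ring

lemma abs_greenKernel_sub_sub_re_le (hz : ‖z‖ ≤ 1) (hz' : ‖z'‖ ≤ 1) (hw : ‖w‖ ≤ 1) (hne : z ≠ w)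
    (hne' : z' ≠ w) :
    |greenKernel z' w - greenKernel z w - 2 * ((z' - z) * greenKernelDz z w).re| ≤
      4 * ‖z' - z‖ ^ 2 * (‖z - w‖ * ‖z' - w‖)⁻¹ := by
  have hreg := abs_log_norm_sub_log_norm_sub_re_le (one_sub_mul_conj_ne_zero hz hw hne)
    (one_sub_mul_conj_ne_zero hz' hw hne')
  have hsing := abs_log_norm_sub_log_norm_sub_re_le (sub_ne_zero.2 hne) (sub_ne_zero.2 hne')
  have hstep : ‖1 - z' * conj w - (1 - z * conj w)‖ ≤ ‖z' - z‖ := by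
    rw [show 1 - z' * conj w - (1 - z * conj w) = -((z' - z) * conj w) by ring, norm_neg, norm_mul,
      RCLike.norm_conj]
    exact mul_le_of_le_one_right (norm_nonneg _) hw
  have hreg_le : 2 * ‖1 - z' * conj w - (1 - z * conj w)‖ ^ 2 *
      (‖1 - z * conj w‖ * ‖1 - z' * conj w‖)⁻¹ ≤
      2 * ‖z' - z‖ ^ 2 * (‖z - w‖ * ‖z' - w‖)⁻¹ := by
    gcongr ?_ * ?_
    · gcongr
    · exact inv_norm_mul_norm_one_sub_mul_conj_le hz hz' hw hne hne'
  have hlin : 2 * ((z' - z) * greenKernelDz z w).re =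
      ((1 - z' * conj w - (1 - z * conj w)) / (1 - z * conj w)).re -
        ((z' - w - (z - w)) / (z - w)).re := by
    rw [← Complex.sub_re, ← Complex.re_ofReal_mul, greenKernelDz]
    congr 1
    push_cast
    ring
  rw [show z' - w - (z - w) = z' - z by ring] at hsing hlin
  rw [greenKernel_eq_sub hz hw hne, greenKernel_eq_sub hz' hw hne', hlin]
  rw [abs_le] at *
  constructor <;> linarith

end GreenKernel

section GreenPotential

lemma ae_restrict_unitBall_norm_le_one_and_ne (z : ℂ) :
    ∀ᵐ w ∂volume.restrict (ball (0 : ℂ) 1), ‖w‖ ≤ 1 ∧ z ≠ w := by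
  filter_upwards [ae_restrict_mem measurableSet_ball, Measure.ae_ne _ z] with w hw hne
  exact ⟨(mem_ball_zero_iff.1 hw).le, hne.symm⟩

lemma integrableOn_greenKernel {z : ℂ} (hz : ‖z‖ ≤ 1) :
    IntegrableOn (greenKernel z) (ball 0 1) := by
  refine ((integrableOn_ball_inv_norm_sub z 0 1).const_mul 2).mono'
    (measurable_greenKernel z).aestronglyMeasurable ?_
  filter_upwards [ae_restrict_unitBall_norm_le_one_and_ne z] with w ⟨hw, hne⟩
  exact abs_greenKernel_le hz hw hne

lemma integrableOn_greenKernelDz {z : ℂ} (hz : ‖z‖ ≤ 1) :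
    IntegrableOn (greenKernelDz z) (ball 0 1) := by
  refine (integrableOn_ball_inv_norm_sub z 0 1).mono'
    (measurable_greenKernelDz z).aestronglyMeasurable ?_
  filter_upwards [ae_restrict_unitBall_norm_le_one_and_ne z] with w ⟨hw, hne⟩
  exact norm_greenKernelDz_le hz hw hne

/-- The integral `(1/2π) ∫_𝔻 ∂G/∂z(z, w) g(w) dA(w)`, obtained from `greenPotential` by formal
differentiation under the integral sign. -/
def greenPotentialDz (g : ℂ → ℂ) (z : ℂ) : ℂ :=
  (1 / (2 * Real.pi) : ℝ) • ∫ w in ball (0 : ℂ) 1, greenKernelDz z w * g w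

/-- The candidate for the real derivative of `greenPotential g` at `z`. The Green function is real,
so the coefficient of `z̄` is that of `z` for the density `ḡ`, conjugated. -/
def greenPotentialFDeriv (g : ℂ → ℂ) (z : ℂ) : ℂ →L[ℝ] ℂ :=
  greenPotentialDz g z • ContinuousLinearMap.id ℝ ℂ +
    conj (greenPotentialDz (fun w => conj (g w)) z) • (Complex.conjCLE : ℂ →L[ℝ] ℂ)

variable {M : ℝ} {g k : ℂ → ℂ} {z z' : ℂ}

lemma nonneg_of_ae_unitBall_norm_le (hM : ∀ᵐ w ∂volume.restrict (ball (0 : ℂ) 1), ‖g w‖ ≤ M) :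
    0 ≤ M := by
  have : (ae (volume.restrict (ball (0 : ℂ) 1))).NeBot := by
    rw [ae_neBot, Ne, Measure.restrict_eq_zero]
    exact (measure_ball_pos volume 0 one_pos).ne'
  obtain ⟨w, hw⟩ := hM.exists
  exact (norm_nonneg _).trans hw

lemma norm_integral_mul_le_of_norm_le_two_poles
    (hM : ∀ᵐ w ∂volume.restrict (ball (0 : ℂ) 1), ‖g w‖ ≤ M) {C : ℝ} (hC : 0 ≤ C)
    (hz : z ∈ ball (0 : ℂ) 1) (hz' : z' ∈ ball (0 : ℂ) 1) (hne : z ≠ z')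
    (hk : ∀ w, ‖w‖ ≤ 1 → z ≠ w → z' ≠ w → ‖k w‖ ≤ C * (‖z - w‖ * ‖z' - w‖)⁻¹) :
    ‖(1 / (2 * Real.pi) : ℝ) • ∫ w in ball (0 : ℂ) 1, k w * g w‖ ≤
      M * (C * (1 + Real.log (6 / ‖z - z'‖))) := by
  have hM0 : 0 ≤ M := nonneg_of_ae_unitBall_norm_le hM
  have hpoles := setIntegral_ball_inv_norm_mul_norm_le hz hz' hne
  have hnorm := norm_integral_le_of_norm_le (f := fun w => k w * g w)
    (((integrableOn_ball_inv_norm_mul_norm (c := 0) (R := 1) hne).const_mul C).mul_const M) <| by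
    filter_upwards [hM, ae_restrict_unitBall_norm_le_one_and_ne z,
      ae_restrict_unitBall_norm_le_one_and_ne z'] with w hgw ⟨hw, hzw⟩ ⟨_, hzw'⟩
    rw [norm_mul]
    gcongr
    exact hk w hw hzw hzw'
  rw [integral_mul_const, integral_const_mul] at hnorm
  rw [mul_one] at hpoles
  rw [norm_smul, Real.norm_of_nonneg (by positivity)]
  calc 1 / (2 * Real.pi) * ‖∫ w in ball (0 : ℂ) 1, k w * g w‖
      ≤ 1 / (2 * Real.pi) * (C * (2 * Real.pi * (1 + Real.log (6 / ‖z - z'‖))) * M) := by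
        gcongr
        exact hnorm.trans (by gcongr)
    _ = M * (C * (1 + Real.log (6 / ‖z - z'‖))) := by field_simp

lemma norm_greenPotentialDz_sub_le
    (hg : AEStronglyMeasurable g (volume.restrict (ball (0 : ℂ) 1)))
    (hM : ∀ᵐ w ∂volume.restrict (ball (0 : ℂ) 1), ‖g w‖ ≤ M)
    (hz : z ∈ ball (0 : ℂ) 1) (hz' : z' ∈ ball (0 : ℂ) 1) (hne : z ≠ z') :
    ‖greenPotentialDz g z - greenPotentialDz g z'‖ ≤
      M * (‖z - z'‖ * (1 + Real.log (6 / ‖z - z'‖))) := by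
  have hz1 := (mem_ball_zero_iff.1 hz).le
  have hz1' := (mem_ball_zero_iff.1 hz').le
  rw [greenPotentialDz, greenPotentialDz, ← smul_sub,
    ← integral_sub ((integrableOn_greenKernelDz hz1).mul_bdd hg hM)
      ((integrableOn_greenKernelDz hz1').mul_bdd hg hM)]
  simp only [← sub_mul]
  exact norm_integral_mul_le_of_norm_le_two_poles hM (norm_nonneg _) hz hz' hne
    fun w hw => norm_greenKernelDz_sub_le hz1 hz1' hw

lemma greenPotentialFDeriv_apply
    (hg : AEStronglyMeasurable g (volume.restrict (ball (0 : ℂ) 1)))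
    (hM : ∀ᵐ w ∂volume.restrict (ball (0 : ℂ) 1), ‖g w‖ ≤ M)
    (hz : ‖z‖ ≤ 1) (h : ℂ) :
    greenPotentialFDeriv g z h = (1 / (2 * Real.pi) : ℝ) • ∫ w in ball (0 : ℂ) 1,
      ((2 * (h * greenKernelDz z w).re : ℝ) : ℂ) * g w := by
  have hK := integrableOn_greenKernelDz hz
  have hKbar : IntegrableOn (fun w => conj (greenKernelDz z w)) (ball 0 1) :=
    Complex.conjCLE.integrable_comp_iff.2 hK
  have hsplit (w : ℂ) : ((2 * (h * greenKernelDz z w).re : ℝ) : ℂ) * g w =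
      h * (greenKernelDz z w * g w) + conj h * (conj (greenKernelDz z w) * g w) := by
    push_cast
    rw [Complex.re_eq_add_conj, map_mul]
    ring
  simp only [hsplit]
  rw [integral_add ((hK.mul_bdd hg hM).const_mul h) ((hKbar.mul_bdd hg hM).const_mul (conj h)),
    integral_const_mul, integral_const_mul]
  simp only [greenPotentialFDeriv, greenPotentialDz, one_div, mul_inv_rev, Complex.real_smul,
    Complex.ofReal_mul, Complex.ofReal_inv, Complex.ofReal_ofNat, map_mul, map_inv₀,
    Complex.conj_ofReal, Complex.conj_ofNat, ← integral_conj, RingHomCompTriple.comp_apply,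
    RingHom.id_apply, add_apply, smul_apply, ContinuousLinearMap.id_apply, smul_eq_mul,
    ContinuousLinearEquiv.coe_coe, ContinuousAlgEquiv.coeCLE_apply, Complex.conjCAE_apply, smul_add]
  ring

lemma norm_greenPotential_sub_sub_le
    (hg : AEStronglyMeasurable g (volume.restrict (ball (0 : ℂ) 1)))
    (hM : ∀ᵐ w ∂volume.restrict (ball (0 : ℂ) 1), ‖g w‖ ≤ M)
    (hz : z ∈ ball (0 : ℂ) 1) (hz' : z' ∈ ball (0 : ℂ) 1) (hne : z ≠ z') :
    ‖greenPotential g z' - greenPotential g z - greenPotentialFDeriv g z (z' - z)‖ ≤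
      M * (4 * ‖z' - z‖ ^ 2 * (1 + Real.log (6 / ‖z - z'‖))) := by
  have hz1 := (mem_ball_zero_iff.1 hz).le
  have hz1' := (mem_ball_zero_iff.1 hz').le
  have hG {ζ : ℂ} (hζ : ‖ζ‖ ≤ 1) :
      IntegrableOn (fun w => (greenKernel ζ w : ℂ) * g w) (ball 0 1) :=
    (integrableOn_greenKernel hζ).ofReal.mul_bdd hg hM
  have hRe : IntegrableOn (fun w => ((2 * ((z' - z) * greenKernelDz z w).re : ℝ) : ℂ) * g w)
      (ball 0 1) :=
    (((integrableOn_greenKernelDz hz1).const_mul (z' - z)).re.const_mul 2).ofReal.mul_bdd hg hM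
  have hdiff : greenPotential g z' - greenPotential g z - greenPotentialFDeriv g z (z' - z) =
      (1 / (2 * Real.pi) : ℝ) • ∫ w in ball (0 : ℂ) 1, ((greenKernel z' w - greenKernel z w -
        2 * ((z' - z) * greenKernelDz z w).re : ℝ) : ℂ) * g w := by
    have hsplit (w : ℂ) : ((greenKernel z' w - greenKernel z w -
        2 * ((z' - z) * greenKernelDz z w).re : ℝ) : ℂ) * g w =
        (greenKernel z' w * g w - greenKernel z w * g w) -
          ((2 * ((z' - z) * greenKernelDz z w).re : ℝ) : ℂ) * g w := by
      rw [Complex.ofReal_sub, Complex.ofReal_sub, sub_mul, sub_mul]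
    have hGG : IntegrableOn (fun w => (greenKernel z' w : ℂ) * g w - greenKernel z w * g w)
        (ball 0 1) := (hG hz1').sub (hG hz1)
    simp only [hsplit]
    rw [integral_sub hGG hRe, integral_sub (hG hz1') (hG hz1), smul_sub,
      smul_sub, greenPotentialFDeriv_apply hg hM hz1]
    rfl
  rw [hdiff]
  refine norm_integral_mul_le_of_norm_le_two_poles hM (by positivity) hz hz' hne
    fun w hw hzw hzw' => ?_
  rw [Complex.norm_real]
  exact abs_greenKernel_sub_sub_re_le hz1 hz1' hw hzw hzw'

lemma hasFDerivAt_greenPotential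
    (hg : AEStronglyMeasurable g (volume.restrict (ball (0 : ℂ) 1)))
    (hM : ∀ᵐ w ∂volume.restrict (ball (0 : ℂ) 1), ‖g w‖ ≤ M)
    (hz : z ∈ ball (0 : ℂ) 1) :
    HasFDerivAt (greenPotential g) (greenPotentialFDeriv g z) z := by
  have hlim : Tendsto (fun z' => 4 * M * (‖z' - z‖ * (1 + Real.log (6 / ‖z' - z‖)))) (nhds z)
      (nhds 0) := by
    have := ((continuous_mul_one_add_log_div 6).comp
      ((continuous_id.sub continuous_const).norm : Continuous fun z' : ℂ => ‖z' - z‖)).const_mul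
      (4 * M)
    simpa using this.tendsto z
  refine .of_isLittleO <| Asymptotics.isLittleO_iff.2 fun ε hε => ?_
  filter_upwards [isOpen_ball.mem_nhds hz, hlim.eventually (ge_mem_nhds hε)] with z' hz' hsmall
  obtain rfl | hne := eq_or_ne z z'
  · simp
  calc ‖greenPotential g z' - greenPotential g z - greenPotentialFDeriv g z (z' - z)‖
      ≤ M * (4 * ‖z' - z‖ ^ 2 * (1 + Real.log (6 / ‖z - z'‖))) :=
        norm_greenPotential_sub_sub_le hg hM hz hz' hne
    _ = 4 * M * (‖z' - z‖ * (1 + Real.log (6 / ‖z' - z‖))) * ‖z' - z‖ := by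
        rw [norm_sub_rev z z']
        ring
    _ ≤ ε * ‖z' - z‖ := by gcongr

end GreenPotential

section Wirtinger

variable {f : ℂ → ℂ} {a b z : ℂ}

lemma wdz_eq_of_hasFDerivAt (hf : HasFDerivAt f
    (a • ContinuousLinearMap.id ℝ ℂ + b • (Complex.conjCLE : ℂ →L[ℝ] ℂ)) z) : wdz f z = a := by
  rw [wdz, hf.fderiv]
  simp only [add_apply, smul_apply, ContinuousLinearMap.id_apply, smul_eq_mul, mul_one,
    ContinuousLinearEquiv.coe_coe, ContinuousAlgEquiv.coeCLE_apply, Complex.conjCAE_apply, map_one,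
    Complex.conj_I, mul_neg]
  linear_combination (b - a) / 2 * Complex.I_mul_I

lemma wdzbar_eq_of_hasFDerivAt (hf : HasFDerivAt f
    (a • ContinuousLinearMap.id ℝ ℂ + b • (Complex.conjCLE : ℂ →L[ℝ] ℂ)) z) :
    wdzbar f z = b := by
  rw [wdzbar, hf.fderiv]
  simp only [add_apply, smul_apply, ContinuousLinearMap.id_apply, smul_eq_mul, mul_one,
    ContinuousLinearEquiv.coe_coe, ContinuousAlgEquiv.coeCLE_apply, Complex.conjCAE_apply, map_one,
    Complex.conj_I, mul_neg]
  linear_combination (a - b) / 2 * Complex.I_mul_I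

end Wirtinger

section LogLipschitz

variable {M : ℝ} {g : ℂ → ℂ} {z z' : ℂ}

lemma norm_wdz_greenPotential_sub_le
    (hg : AEStronglyMeasurable g (volume.restrict (ball (0 : ℂ) 1)))
    (hM : ∀ᵐ w ∂volume.restrict (ball (0 : ℂ) 1), ‖g w‖ ≤ M)
    (hz : z ∈ ball (0 : ℂ) 1) (hz' : z' ∈ ball (0 : ℂ) 1) (hne : z ≠ z') :
    ‖wdz (greenPotential g) z - wdz (greenPotential g) z'‖ ≤
      M * (‖z - z'‖ * (1 + Real.log (6 / ‖z - z'‖))) := by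
  rw [wdz_eq_of_hasFDerivAt (hasFDerivAt_greenPotential hg hM hz),
    wdz_eq_of_hasFDerivAt (hasFDerivAt_greenPotential hg hM hz')]
  exact norm_greenPotentialDz_sub_le hg hM hz hz' hne

lemma norm_wdzbar_greenPotential_sub_le
    (hg : AEStronglyMeasurable g (volume.restrict (ball (0 : ℂ) 1)))
    (hM : ∀ᵐ w ∂volume.restrict (ball (0 : ℂ) 1), ‖g w‖ ≤ M)
    (hz : z ∈ ball (0 : ℂ) 1) (hz' : z' ∈ ball (0 : ℂ) 1) (hne : z ≠ z') :
    ‖wdzbar (greenPotential g) z - wdzbar (greenPotential g) z'‖ ≤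
      M * (‖z - z'‖ * (1 + Real.log (6 / ‖z - z'‖))) := by
  rw [wdzbar_eq_of_hasFDerivAt (hasFDerivAt_greenPotential hg hM hz),
    wdzbar_eq_of_hasFDerivAt (hasFDerivAt_greenPotential hg hM hz'), ← map_sub, RCLike.norm_conj]
  exact norm_greenPotentialDz_sub_le (Complex.continuous_conj.comp_aestronglyMeasurable hg)
    (by simpa only [RCLike.norm_conj] using hM) hz hz' hne

lemma one_add_log_six_div_le {r : ℝ} (hr : 0 < r) (hr2 : r ≤ 2) :
    1 + Real.log (6 / r) ≤ (Real.log (4 * (1 + r)) - Real.log r) * (2 + r) := by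
  rw [← Real.log_div (by positivity) hr.ne']
  set L := Real.log (4 * (1 + r) / r)
  have hlarge : 1 + Real.log 2 ≤ L := by
    have hlog3 : 1 ≤ Real.log 3 :=
      (Real.le_log_iff_exp_le three_pos).2 Real.exp_one_lt_three.le
    calc 1 + Real.log 2 ≤ Real.log 3 + Real.log 2 := by gcongr
      _ = Real.log (3 * 2) := (Real.log_mul three_ne_zero two_ne_zero).symm
      _ ≤ L := Real.log_le_log (by norm_num) (by rw [le_div_iff₀ hr]; linarith)
  have hsix : Real.log (6 / r) ≤ Real.log 2 + L := by
    calc Real.log (6 / r) ≤ Real.log (2 * (4 * (1 + r) / r)) := by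
          refine Real.log_le_log (by positivity) ?_
          rw [← mul_div_assoc]
          gcongr
          linarith
      _ = Real.log 2 + L := Real.log_mul two_ne_zero (by positivity)
  have hL : 0 ≤ L := (add_nonneg zero_le_one (Real.log_nonneg one_le_two)).trans hlarge
  calc 1 + Real.log (6 / r) ≤ L * 2 := by linarith
    _ ≤ L * (2 + r) := by gcongr; linarith

end LogLipschitz

theorem stmt12_general (M : ℝ) (g : ℂ → ℂ)
    (hg : AEStronglyMeasurable g (volume.restrict (ball (0 : ℂ) 1)))
    (hM : ∀ᵐ w ∂volume.restrict (ball (0 : ℂ) 1), ‖g w‖ ≤ M) :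
    ∀ z ∈ ball (0 : ℂ) 1, ∀ z' ∈ ball (0 : ℂ) 1, z ≠ z' →
      ‖wdz (greenPotential g) z - wdz (greenPotential g) z'‖ ≤
        M * (Real.log (4 * (1 + ‖z - z'‖)) - Real.log ‖z - z'‖) *
          (‖z - z'‖ * (2 + ‖z - z'‖)) ∧
      ‖wdzbar (greenPotential g) z - wdzbar (greenPotential g) z'‖ ≤
        M * (Real.log (4 * (1 + ‖z - z'‖)) - Real.log ‖z - z'‖) *
          (‖z - z'‖ * (2 + ‖z - z'‖)) := by
  intro z hz z' hz' hne
  have hM0 : 0 ≤ M := nonneg_of_ae_unitBall_norm_le hM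
  have hd : ‖z - z'‖ ≤ 2 := by
    linarith [norm_sub_le z z', mem_ball_zero_iff.1 hz, mem_ball_zero_iff.1 hz']
  have hlog := one_add_log_six_div_le (norm_pos_iff.2 (sub_ne_zero.2 hne)) hd
  have hbound : M * (‖z - z'‖ * (1 + Real.log (6 / ‖z - z'‖))) ≤
      M * (Real.log (4 * (1 + ‖z - z'‖)) - Real.log ‖z - z'‖) *
        (‖z - z'‖ * (2 + ‖z - z'‖)) := by
    calc M * (‖z - z'‖ * (1 + Real.log (6 / ‖z - z'‖)))
        ≤ M * (‖z - z'‖ * ((Real.log (4 * (1 + ‖z - z'‖)) - Real.log ‖z - z'‖) *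
            (2 + ‖z - z'‖))) := by gcongr
      _ = _ := by ring
  exact ⟨(norm_wdz_greenPotential_sub_le hg hM hz hz' hne).trans hbound,
    (norm_wdzbar_greenPotential_sub_le hg hM hz hz' hne).trans hbound⟩

/-- Bounds on the differences of the Wirtinger derivatives of the Green potential. -/
theorem stmt12 (M₁ : ℝ) (g : ℂ → ℂ)
    (hg : ContinuousOn g (closedBall (0:ℂ) 1))
    (hgb : ∀ z ∈ ball (0:ℂ) 1, ‖g z‖ ≤ M₁) :
    ∀ z ∈ ball (0:ℂ) 1, z ≠ 0 →
      ‖wdz (greenPotential g) z - wdz (greenPotential g) 0‖ ≤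
        M₁ * (Real.log (4 * (1 + ‖z‖)) - Real.log ‖z‖) * (‖z‖ * (2 + ‖z‖)) ∧
      ‖wdzbar (greenPotential g) z - wdzbar (greenPotential g) 0‖ ≤
        M₁ * (Real.log (4 * (1 + ‖z‖)) - Real.log ‖z‖) * (‖z‖ * (2 + ‖z‖)) := by
  intro z hz hz0
  simpa only [sub_zero] using stmt12_general M₁ g
    ((hg.mono ball_subset_closedBall).aestronglyMeasurable measurableSet_ball)
    (ae_restrict_of_forall_mem measurableSet_ball hgb) z hz 0 (mem_ball_self one_pos) hz0
end
end

section
/- Let h be a complex-valued harmonic function on 𝔻 with |h(z)| ≤ M for all z ∈ 𝔻, for some constant M > 0. Then for every z ∈ 𝔻: |h_z(z) − h_z(0)| + |h_{z̄}(z) − h_{z̄}(0)| ≤ (4M/π)·|z|(2−|z|)/(1−|z|)². -/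
open Metric MeasureTheory Set Filter

noncomputable section

/-! For a unimodular `u`, the real part of `u * h` on the disc is the real part of a holomorphic
`F`, and `F' = u * h_z + conj (u * h_z̄)`. A suitable `u` aligns the differences of the two Wirtinger
derivatives, so that their norms add up to `‖F' z - F' 0‖`. Since `conj F` only has nonpositive
frequencies on a circle of radius `R`, the Taylor coefficients of `F` are
`aₙ = (1 / (π * R ^ n)) ∫ exp (-i n t) Re F dt` for `n ≥ 1`. Rotating `aₙ` to be real replaces the
kernel by `cos (n * t + δ)`, and `∫ |cos (n * t + δ)| dt = 4` gives `R ^ n * |aₙ| ≤ 4 * M / π`,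
where `|Re F| ≤ M`. Summing the Taylor series of `F'` with this bound gives the estimate. -/

section FourierCoefficients

open Complex

lemma periodic_abs_cos : Function.Periodic (fun t => |Real.cos t|) Real.pi := fun t => by
  simp [Real.cos_add_pi]

lemma integral_abs_cos_zero_pi : ∫ t in (0 : ℝ)..Real.pi, |Real.cos t| = 2 := by
  have shift := periodic_abs_cos.intervalIntegral_add_eq 0 (-(Real.pi / 2))
  rw [zero_add, show -(Real.pi / 2) + Real.pi = Real.pi / 2 by ring] at shift
  calc ∫ t in (0 : ℝ)..Real.pi, |Real.cos t|
      = ∫ t in -(Real.pi / 2)..Real.pi / 2, |Real.cos t| := shift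
    _ = ∫ t in -(Real.pi / 2)..Real.pi / 2, Real.cos t := by
        refine intervalIntegral.integral_congr fun t ht => ?_
        rw [uIcc_of_le (by linarith [Real.pi_pos])] at ht
        exact abs_of_nonneg (Real.cos_nonneg_of_mem_Icc ht)
    _ = 2 := by
        rw [integral_cos, Real.sin_neg, Real.sin_pi_div_two]
        norm_num

lemma integral_abs_cos_nat_mul_add {n : ℕ} (hn : n ≠ 0) (δ : ℝ) :
    ∫ t in (0 : ℝ)..2 * Real.pi, |Real.cos (n * t + δ)| = 4 := by
  have hn' : (n : ℝ) ≠ 0 := Nat.cast_ne_zero.mpr hn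
  have half_periods : ∫ t in δ..δ + (2 * n : ℤ) • Real.pi, |Real.cos t| = 2 * n * 2 := by
    rw [periodic_abs_cos.intervalIntegral_add_zsmul_eq _ _
        fun _ _ => Continuous.intervalIntegrable (by fun_prop) _ _,
      periodic_abs_cos.intervalIntegral_add_eq δ 0, zero_add, integral_abs_cos_zero_pi]
    simp
  have endpoint : (n : ℝ) * (2 * Real.pi) + δ = δ + (2 * n : ℤ) • Real.pi := by
    simp only [zsmul_eq_mul, Int.cast_mul, Int.cast_ofNat, Int.cast_natCast]
    ring
  rw [intervalIntegral.integral_comp_mul_add (fun t => |Real.cos t|) hn', endpoint, mul_zero,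
    zero_add, half_periods, smul_eq_mul]
  field_simp
  norm_num

lemma exists_norm_integral_exp_mul_ofReal_eq {k a b : ℝ} {u : ℝ → ℝ}
    (hu : IntervalIntegrable u volume a b) :
    ∃ δ : ℝ, ‖∫ t in a..b, exp (-(k * t * I)) * u t‖ =
      ∫ t in a..b, Real.cos (k * t + δ) * u t := by
  set ζ : ℂ := ∫ t in a..b, exp (-(k * t * I)) * u t
  have rotate : exp (-(arg ζ * I)) * ζ = ‖ζ‖ := by
    nth_rw 2 [← norm_mul_exp_arg_mul_I ζ]
    rw [mul_left_comm, ← exp_add, neg_add_cancel, exp_zero, mul_one]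
  have re_integrand (t : ℝ) : (exp (-(arg ζ * I)) * (exp (-(k * t * I)) * u t)).re =
      Real.cos (k * t + arg ζ) * u t := by
    have angle : -(arg ζ * I) + -(k * t * I) = (-(k * t + arg ζ) : ℝ) * I := by
      push_cast
      ring
    rw [← mul_assoc, ← exp_add, angle, re_mul_ofReal, exp_ofReal_mul_I_re, Real.cos_neg]
  have integrable : IntervalIntegrable (fun t => exp (-(arg ζ * I)) * (exp (-(k * t * I)) * u t))
      volume a b :=
    IntervalIntegrable.const_mul
      (IntervalIntegrable.continuousOn_mul ⟨hu.1.ofReal, hu.2.ofReal⟩ (by fun_prop)) _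
  refine ⟨arg ζ, ?_⟩
  calc ‖ζ‖ = (exp (-(arg ζ * I)) * ζ).re := by rw [rotate, ofReal_re]
    _ = (∫ t in a..b, exp (-(arg ζ * I)) * (exp (-(k * t * I)) * u t)).re := by
        rw [intervalIntegral.integral_const_mul]
    _ = ∫ t in a..b, Real.cos (k * t + arg ζ) * u t := by
        simp_rw [← re_integrand]
        exact (reCLM.intervalIntegral_comp_comm integrable).symm

lemma norm_integral_exp_mul_ofReal_le {n : ℕ} {M : ℝ} {u : ℝ → ℝ} (hn : n ≠ 0)
    (hu : IntervalIntegrable u volume 0 (2 * Real.pi)) (hM : ∀ t, |u t| ≤ M) :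
    ‖∫ t in (0 : ℝ)..2 * Real.pi, exp (-(n * t * I)) * u t‖ ≤ 4 * M := by
  obtain ⟨δ, hδ⟩ := exists_norm_integral_exp_mul_ofReal_eq (k := n) hu
  rw [ofReal_natCast] at hδ
  have bound (t : ℝ) : ‖Real.cos (n * t + δ) * u t‖ ≤ |Real.cos (n * t + δ)| * M := by
    rw [norm_mul, Real.norm_eq_abs, Real.norm_eq_abs]
    gcongr
    exact hM t
  calc ‖∫ t in (0 : ℝ)..2 * Real.pi, exp (-(n * t * I)) * u t‖
      = ∫ t in (0 : ℝ)..2 * Real.pi, Real.cos (n * t + δ) * u t := hδ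
    _ ≤ ‖∫ t in (0 : ℝ)..2 * Real.pi, Real.cos (n * t + δ) * u t‖ := Real.le_norm_self _
    _ ≤ ∫ t in (0 : ℝ)..2 * Real.pi, |Real.cos (n * t + δ)| * M :=
        intervalIntegral.norm_integral_le_of_norm_le Real.two_pi_pos.le
          (ae_of_all _ fun t _ => bound t) (Continuous.intervalIntegrable (by fun_prop) _ _)
    _ = 4 * M := by
        rw [intervalIntegral.integral_mul_const, integral_abs_cos_nat_mul_add hn]

end FourierCoefficients

section TaylorCoefficients

open Complex
open scoped Nat

variable {E : Type*} [NormedAddCommGroup E] [NormedSpace ℂ E] {f : ℂ → E} {c z : ℂ} {R : ℝ}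

/-- The `n`-th Taylor coefficient `f⁽ⁿ⁾(c) / n!` of `f` at `c`. -/
def taylorCoeff (f : ℂ → E) (c : ℂ) (n : ℕ) : E :=
  (n ! : ℂ)⁻¹ • iteratedDeriv n f c

lemma taylorCoeff_deriv (f : ℂ → E) (c : ℂ) (n : ℕ) :
    taylorCoeff (deriv f) c n = (n + 1 : ℂ) • taylorCoeff f c (n + 1) := by
  have hn : (n + 1 : ℂ) ≠ 0 := Nat.cast_add_one_ne_zero n
  rw [taylorCoeff, taylorCoeff, iteratedDeriv_succ', smul_smul, Nat.factorial_succ]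
  push_cast
  rw [mul_inv, mul_inv_cancel_left₀ hn]

variable [CompleteSpace E]

lemma hasSum_pow_smul_taylorCoeff (hf : DifferentiableOn ℂ f (ball c R)) (hz : z ∈ ball c R) :
    HasSum (fun n => (z - c) ^ n • taylorCoeff f c n) (f z) := by
  convert! hasSum_taylorSeries_on_ball hf hz using 2
  exact smul_comm _ _ _

lemma hasSum_deriv_sub_deriv_center (hf : DifferentiableOn ℂ f (ball c R)) (hz : z ∈ ball c R) :
    HasSum (fun n : ℕ => (z - c) ^ (n + 1) • (n + 2 : ℂ) • taylorCoeff f c (n + 2))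
      (deriv f z - deriv f c) := by
  have series := hasSum_pow_smul_taylorCoeff (hf.deriv isOpen_ball) hz
  rw [← hasSum_nat_add_iff' 1] at series
  convert! series using 1
  · ext n
    rw [taylorCoeff_deriv]
    push_cast
    rw [add_assoc (n : ℂ), one_add_one_eq_two]
  · simp [taylorCoeff]

lemma circleAverage_div_pow_smul (hR : 0 < R) (hf : DiffContOnCl ℂ f (ball c R)) (n : ℕ) :
    Real.circleAverage (fun z => (R / (z - c)) ^ n • f z) c R =
      (R : ℂ) ^ n • taylorCoeff f c n := by
  have kernel : ∀ z : ℂ, (z - c)⁻¹ • (R / (z - c)) ^ n • f z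
      = (R : ℂ) ^ n • (1 / (z - c) ^ (n + 1)) • f z := fun z => by
    rw [smul_smul, smul_smul]
    congr 1
    rw [pow_succ, one_div, mul_inv]
    ring
  simp_rw [Real.circleAverage_eq_circleIntegral hR.ne', kernel, circleIntegral.integral_smul]
  rw [hf.circleIntegral_one_div_sub_center_pow_smul hR, taylorCoeff]
  simp only [smul_smul]
  congr 1
  field_simp [two_pi_I_ne_zero]

lemma circleAverage_pow_smul_eq_zero (hR : 0 < R) (hf : DiffContOnCl ℂ f (ball c R)) {n : ℕ}
    (hn : n ≠ 0) : Real.circleAverage (fun z => ((z - c) / R) ^ n • f z) c R = 0 := by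
  have monomial : Differentiable ℂ fun z : ℂ => ((z - c) / R) ^ n := by fun_prop
  rw [← abs_of_pos hR] at hf
  simpa [hn] using (monomial.diffContOnCl.smul hf).circleAverage

end TaylorCoefficients
section RealPartBound

open Complex ComplexConjugate
open scoped Topology

variable {F : ℂ → ℂ} {c : ℂ} {R M : ℝ} {n : ℕ}

lemma div_circleMap_sub_pow (hR : R ≠ 0) (t : ℝ) :
    (R / (circleMap c R t - c)) ^ n = exp (-(n * t * I)) := by
  have hR' : (R : ℂ) ≠ 0 := ofReal_ne_zero.mpr hR
  rw [circleMap_sub_center, circleMap_zero, div_mul_cancel_left₀ hR', ← exp_neg, ← exp_nat_mul]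
  congr 1
  ring

lemma conj_div_sub_eq_of_mem_sphere {z : ℂ} (hR : R ≠ 0) (hz : z ∈ sphere c R) :
    conj (R / (z - c)) = (z - c) / R := by
  have hR' : (R : ℂ) ≠ 0 := ofReal_ne_zero.mpr hR
  have hzc : conj (z - c) ≠ 0 := by
    rw [map_ne_zero, sub_ne_zero]
    exact ne_of_mem_sphere hz hR
  rw [map_div₀, conj_ofReal, div_eq_div_iff hzc hR', mul_conj', mem_sphere_iff_norm.mp hz, sq]

lemma continuousOn_div_sub_pow (hR : R ≠ 0) (n : ℕ) :
    ContinuousOn (fun z : ℂ => (R / (z - c)) ^ n) (sphere c R) :=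
  (continuousOn_const.div (by fun_prop) fun _ hz =>
    sub_ne_zero.mpr (ne_of_mem_sphere hz hR)).pow n

lemma circleAverage_div_pow_mul_conj (hR : 0 < R) (hF : DiffContOnCl ℂ F (ball c R))
    (hn : n ≠ 0) : Real.circleAverage (fun z => (R / (z - c)) ^ n * conj (F z)) c R = 0 := by
  have conj_kernel : EqOn (fun z => (R / (z - c)) ^ n * conj (F z))
      (conjCLE ∘ fun z => ((z - c) / R) ^ n • F z) (sphere c |R|) := fun z hz => by
    rw [abs_of_pos hR] at hz
    simp [← conj_div_sub_eq_of_mem_sphere hR.ne' hz]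
  have integrable : CircleIntegrable (fun z => ((z - c) / R) ^ n • F z) c R :=
    ContinuousOn.circleIntegrable hR.le
      ((by fun_prop : ContinuousOn (fun z : ℂ => ((z - c) / R) ^ n) (sphere c R)).smul
        (hF.continuousOn_ball.mono sphere_subset_closedBall))
  calc Real.circleAverage (fun z => (R / (z - c)) ^ n * conj (F z)) c R
      = conj (Real.circleAverage (fun z => ((z - c) / R) ^ n • F z) c R) :=
        (Real.circleAverage_congr_sphere conj_kernel).trans
          ((conjCLE : ℂ →L[ℝ] ℂ).circleAverage_comp_comm integrable)
    _ = 0 := by rw [circleAverage_pow_smul_eq_zero hR hF hn, map_zero]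

lemma circleAverage_div_pow_mul_re (hR : 0 < R) (hF : DiffContOnCl ℂ F (ball c R))
    (hn : n ≠ 0) :
    Real.circleAverage (fun z => (R / (z - c)) ^ n * (2 * (F z).re : ℝ)) c R =
      R ^ n * taylorCoeff F c n := by
  have continuous_kernel := continuousOn_div_sub_pow (c := c) hR.ne' n
  have continuous_F : ContinuousOn F (sphere c R) :=
    hF.continuousOn_ball.mono sphere_subset_closedBall
  have integrable_F : CircleIntegrable (fun z => (R / (z - c)) ^ n * F z) c R :=
    (continuous_kernel.mul continuous_F).circleIntegrable hR.le
  have integrable_conj : CircleIntegrable (fun z => (R / (z - c)) ^ n * conj (F z)) c R :=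
    (continuous_kernel.mul (continuous_conj.comp_continuousOn continuous_F)).circleIntegrable hR.le
  calc Real.circleAverage (fun z => (R / (z - c)) ^ n * (2 * (F z).re : ℝ)) c R
      = Real.circleAverage (fun z => (R / (z - c)) ^ n * F z + (R / (z - c)) ^ n * conj (F z))
          c R := by simp_rw [← add_conj, mul_add]
    _ = R ^ n * taylorCoeff F c n := by
        rw [Real.circleAverage_fun_add integrable_F integrable_conj,
          circleAverage_div_pow_mul_conj hR hF hn, add_zero]
        exact circleAverage_div_pow_smul hR hF n

lemma integral_exp_mul_re (hR : 0 < R) (hF : DiffContOnCl ℂ F (ball c R)) (hn : n ≠ 0) :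
    ∫ t in (0 : ℝ)..2 * Real.pi, exp (-(n * t * I)) * (F (circleMap c R t)).re =
      Real.pi * (R ^ n * taylorCoeff F c n) := by
  have average := circleAverage_div_pow_mul_re hR hF hn
  rw [Real.circleAverage_def, inv_smul_eq_iff₀ Real.two_pi_pos.ne'] at average
  simp_rw [div_circleMap_sub_pow hR.ne', ofReal_mul, ofReal_ofNat, mul_left_comm _ (2 : ℂ),
    intervalIntegral.integral_const_mul, real_smul, ofReal_mul, ofReal_ofNat]
    at average
  linear_combination average / 2

lemma pow_mul_norm_taylorCoeff_le_of_abs_re_le_sphere (hR : 0 < R)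
    (hF : DiffContOnCl ℂ F (ball c R)) (hM : ∀ z ∈ sphere c R, |(F z).re| ≤ M) (hn : n ≠ 0) :
    R ^ n * ‖taylorCoeff F c n‖ ≤ 4 * M / Real.pi := by
  have continuous_F : Continuous fun t => F (circleMap c R t) :=
    hF.continuousOn_ball.comp_continuous (continuous_circleMap c R) fun t =>
      circleMap_mem_closedBall c hR.le t
  have fourier_bound := norm_integral_exp_mul_ofReal_le hn
    (continuous_re.comp continuous_F |>.intervalIntegrable _ _)
    fun t => hM _ (circleMap_mem_sphere c hR.le t)
  simp only [Function.comp_apply, integral_exp_mul_re hR hF hn, norm_mul, norm_pow, norm_real,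
    Real.norm_of_nonneg hR.le, Real.norm_of_nonneg Real.pi_pos.le] at fourier_bound
  rwa [le_div_iff₀' Real.pi_pos]

lemma pow_mul_norm_taylorCoeff_le_of_abs_re_le (hR : 0 < R)
    (hF : DifferentiableOn ℂ F (ball c R)) (hM : ∀ z ∈ ball c R, |(F z).re| ≤ M) (hn : n ≠ 0) :
    R ^ n * ‖taylorCoeff F c n‖ ≤ 4 * M / Real.pi := by
  have limit : Tendsto (fun ρ : ℝ => ρ ^ n * ‖taylorCoeff F c n‖) (𝓝[<] R)
      (𝓝 (R ^ n * ‖taylorCoeff F c n‖)) :=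
    ((continuous_id.pow n).mul continuous_const).continuousWithinAt
  refine le_of_tendsto limit ?_
  filter_upwards [Ioo_mem_nhdsLT hR] with ρ hρ
  have closedBall_subset : closedBall c ρ ⊆ ball c R := closedBall_subset_ball hρ.2
  exact pow_mul_norm_taylorCoeff_le_of_abs_re_le_sphere hρ.1
    ((hF.mono (closure_ball_subset_closedBall.trans closedBall_subset)).diffContOnCl)
    (fun z hz => hM z (closedBall_subset (sphere_subset_closedBall hz))) hn

end RealPartBound
section DerivativeOscillation

variable {E : Type*} [NormedAddCommGroup E] [NormedSpace ℂ E] [CompleteSpace E]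
  {f : ℂ → E} {c z : ℂ} {R C : ℝ}

lemma hasSum_add_two_mul_pow_succ {𝕜 : Type*} [NormedField 𝕜] [HasSummableGeomSeries 𝕜] {r : 𝕜}
    (hr : ‖r‖ < 1) :
    HasSum (fun n : ℕ => (n + 2 : 𝕜) * r ^ (n + 1)) (r * (2 - r) / (1 - r) ^ 2) := by
  have series := hasSum_choose_mul_geometric_of_norm_lt_one 1 hr
  rw [← hasSum_nat_add_iff' 1] at series
  have hr' : 1 - r ≠ 0 := sub_ne_zero.mpr fun h => by simp [← h] at hr
  convert! series using 1
  · ext n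
    rw [Nat.choose_one_right]
    push_cast
    ring
  · simp only [Finset.sum_range_one, zero_add, Nat.choose_self, Nat.cast_one, pow_zero, mul_one]
    field_simp
    ring

lemma norm_deriv_sub_deriv_center_le (hf : DifferentiableOn ℂ f (ball c R))
    (hC : ∀ n ≠ 0, R ^ n * ‖taylorCoeff f c n‖ ≤ C) (hz : z ∈ ball c R) :
    ‖deriv f z - deriv f c‖ ≤
      C / R * (‖z - c‖ / R * (2 - ‖z - c‖ / R) / (1 - ‖z - c‖ / R) ^ 2) := by
  have hR : 0 < R := pos_of_mem_ball hz
  set r := ‖z - c‖ / R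
  have hr0 : 0 ≤ r := by positivity
  have hr1 : ‖r‖ < 1 := by
    rw [Real.norm_of_nonneg hr0]
    exact (div_lt_one hR).mpr (mem_ball_iff_norm.mp hz)
  have norm_sub : ‖z - c‖ = r * R := (div_mul_cancel₀ _ hR.ne').symm
  refine (hasSum_deriv_sub_deriv_center hf hz).norm_le_of_bounded
    ((hasSum_add_two_mul_pow_succ hr1).mul_left (C / R)) fun n => ?_
  calc ‖(z - c) ^ (n + 1) • (n + 2 : ℂ) • taylorCoeff f c (n + 2)‖
      = (n + 2) * r ^ (n + 1) / R * (R ^ (n + 2) * ‖taylorCoeff f c (n + 2)‖) := by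
        have norm_natCast_add_two : ‖(n + 2 : ℂ)‖ = n + 2 := by
          exact_mod_cast Complex.norm_natCast (n + 2)
        rw [norm_smul, norm_smul, norm_pow, norm_natCast_add_two, norm_sub]
        field_simp
        ring
    _ ≤ (n + 2) * r ^ (n + 1) / R * C := by
        gcongr
        exact hC (n + 2) (by positivity)
    _ = C / R * ((n + 2) * r ^ (n + 1)) := by ring

end DerivativeOscillation

section Wirtinger

open Complex ComplexConjugate InnerProductSpace
open scoped Topology Laplacian

variable {h F : ℂ → ℂ} {z : ℂ}

lemma lap_eq_laplacian (hh : ContDiffAt ℝ 2 h z) : lap h z = Δ h z := by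
  have differentiable : DifferentiableAt ℝ (fderiv ℝ h) z :=
    (hh.fderiv_right (m := 1) (by norm_num)).differentiableAt one_ne_zero
  simp [lap, laplacian_eq_iteratedFDeriv_complexPlane, iteratedFDeriv_two_apply,
    fderiv_clm_apply differentiable]

lemma harmonicOnNhd_of_lap_eq_zero {U : Set ℂ} (hU : IsOpen U) (hh : ContDiffOn ℝ 2 h U)
    (hlap : ∀ z ∈ U, lap h z = 0) : HarmonicOnNhd h U := by
  refine fun z hz => ⟨hh.contDiffAt (hU.mem_nhds hz), ?_⟩
  filter_upwards [hU.mem_nhds hz] with w hw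
  rw [← lap_eq_laplacian (hh.contDiffAt (hU.mem_nhds hw)), hlap w hw, Pi.zero_apply]

lemma deriv_eq_of_re_eventuallyEq (a : ℂ) (hF : DifferentiableAt ℂ F z)
    (hh : DifferentiableAt ℝ h z) (hre : (fun w => (F w).re) =ᶠ[𝓝 z] fun w => (a * h w).re) :
    deriv F z = a * wdz h z + conj (a * wdzbar h z) := by
  have re_fderiv (v : ℂ) : (deriv F z * v).re = (a * fderiv ℝ h z v).re := by
    have left := reCLM.hasFDerivAt.comp z (hF.hasDerivAt.hasFDerivAt.restrictScalars ℝ)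
    have right := reCLM.hasFDerivAt.comp z (hh.hasFDerivAt.const_smul a)
    simpa [mul_comm] using DFunLike.congr_fun (left.unique (right.congr_of_eventuallyEq hre)) v
  have add_eq : a * wdz h z + a * wdzbar h z = a * fderiv ℝ h z 1 := by
    rw [wdz, wdzbar]
    ring
  have sub_eq : a * wdz h z - a * wdzbar h z = -(a * fderiv ℝ h z I) * I := by
    rw [wdz, wdzbar]
    ring
  apply Complex.ext
  · rw [add_re, conj_re, ← add_re, add_eq, ← re_fderiv 1, mul_one]
  · rw [add_im, conj_im, ← sub_eq_add_neg, ← sub_im, sub_eq, mul_I_im, neg_re, ← re_fderiv I,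
      mul_I_re, neg_neg]

lemma exists_norm_eq_one_norm_mul_add_conj (a b : ℂ) :
    ∃ u : ℂ, ‖u‖ = 1 ∧ ‖u * a + conj (u * b)‖ = ‖a‖ + ‖b‖ := by
  set δ : ℝ := -(arg a + arg b) / 2
  have rotate_a : exp (δ * I) * a = ‖a‖ * exp (((arg a - arg b) / 2 : ℝ) * I) := by
    nth_rw 1 [← norm_mul_exp_arg_mul_I a]
    rw [mul_left_comm, ← exp_add, ← add_mul, ← ofReal_add]
    congr 4
    ring
  have rotate_b : conj (exp (δ * I) * b) = ‖b‖ * exp (((arg a - arg b) / 2 : ℝ) * I) := by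
    nth_rw 1 [← norm_mul_exp_arg_mul_I b]
    rw [mul_left_comm, ← exp_add, ← add_mul, ← ofReal_add, map_mul, conj_ofReal, ← exp_conj,
      map_mul, conj_ofReal, conj_I, mul_neg, ← neg_mul, ← ofReal_neg]
    congr 4
    ring
  refine ⟨exp (δ * I), norm_exp_ofReal_mul_I δ, ?_⟩
  rw [rotate_a, rotate_b, ← add_mul, norm_mul, norm_exp_ofReal_mul_I, mul_one, ← ofReal_add,
    norm_real, Real.norm_of_nonneg (by positivity)]

theorem stmt13_general {c : ℂ} {R M : ℝ} (hharm : HarmonicOnNhd h (ball c R))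
    (hb : ∀ z ∈ ball c R, ‖h z‖ ≤ M) (hz : z ∈ ball c R) :
    ‖wdz h z - wdz h c‖ + ‖wdzbar h z - wdzbar h c‖ ≤
      4 * M / Real.pi / R *
        (‖z - c‖ / R * (2 - ‖z - c‖ / R) / (1 - ‖z - c‖ / R) ^ 2) := by
  have hR : 0 < R := pos_of_mem_ball hz
  obtain ⟨u, norm_u, hu⟩ := exists_norm_eq_one_norm_mul_add_conj
    (wdz h z - wdz h c) (wdzbar h z - wdzbar h c)
  obtain ⟨F, analytic_F, re_F⟩ :=
    (hharm.comp_CLM (reCLM ∘L (u • ContinuousLinearMap.id ℝ ℂ))).exists_analyticOnNhd_ball_re_eq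
  have deriv_F : ∀ w ∈ ball c R, deriv F w = u * wdz h w + conj (u * wdzbar h w) :=
    fun w hw => deriv_eq_of_re_eventuallyEq u (analytic_F w hw).differentiableAt
      ((hharm w hw).1.differentiableAt two_ne_zero)
      (re_F.eventuallyEq_of_mem (isOpen_ball.mem_nhds hw))
  have re_bound : ∀ w ∈ ball c R, |(F w).re| ≤ M := fun w hw =>
    calc |(F w).re| = |(u * h w).re| := congrArg abs (re_F hw)
      _ ≤ ‖u * h w‖ := abs_re_le_norm _
      _ ≤ M := by rw [norm_mul, norm_u, one_mul]; exact hb w hw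
  have deriv_sub : deriv F z - deriv F c =
      u * (wdz h z - wdz h c) + conj (u * (wdzbar h z - wdzbar h c)) := by
    rw [deriv_F z hz, deriv_F c (mem_ball_self hR), mul_sub, mul_sub, map_sub]
    ring
  rw [← hu, ← deriv_sub]
  exact norm_deriv_sub_deriv_center_le analytic_F.differentiableOn
    (fun n hn => pow_mul_norm_taylorCoeff_le_of_abs_re_le hR analytic_F.differentiableOn
      re_bound hn) hz

end Wirtinger

/-- Coefficient estimate consequence for bounded harmonic mappings: a bound on the
differences of the Wirtinger derivatives. -/
theorem stmt13 (M : ℝ) (hM : 0 < M) (h : ℂ → ℂ)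
    (hh2 : ContDiffOn ℝ 2 h (ball (0:ℂ) 1))
    (hharm : ∀ z ∈ ball (0:ℂ) 1, lap h z = 0)
    (hb : ∀ z ∈ ball (0:ℂ) 1, ‖h z‖ ≤ M) :
    ∀ z ∈ ball (0:ℂ) 1,
      ‖wdz h z - wdz h 0‖ + ‖wdzbar h z - wdzbar h 0‖ ≤
        4 * M / Real.pi * (‖z‖ * (2 - ‖z‖) / (1 - ‖z‖) ^ 2) := by
  intro z hz
  simpa using stmt13_general (harmonicOnNhd_of_lap_eq_zero isOpen_ball hh2 hharm) hb hz
end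
end

section
/- Let g be a continuous complex-valued function on the closed unit disk and f ∈ C²(𝔻)∩C(𝕋) with Δf = g on 𝔻, f(0) = 0, J_f(0) = 1, sup_{z∈𝔻}|g(z)| ≤ M₁ and sup_{z∈𝔻}|f(z)| ≤ M₂, where M₁ ≥ 0 and M₂ > 0. Then λ(D_f(0)) = ||f_z(0)| − |f_{z̄}(0)|| ≥ 1/((4/π)M₂ + (2/3)M₁). -/
open Metric MeasureTheory Set Filter

noncomputable section

/-!
For unimodular `u`, `v`, integrate `f` over the circle of radius `r` about `c` against the weight
`u e^{-it} + v e^{it}`, obtaining `F r`. The weight is an eigenfunction of `∂_t²` with eigenvalue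
`-1`, so the polar form `(r ∂_r)² + ∂_t² = r² Δ` of the Laplacian turns into the Euler equation
`(r (r F' - F))' = r² G`, where `G` is the same integral of `Δf`. Two integrations compare `F r`
with `r F'(0)`. Here `F'(0) = 2π (u f_z(c) + v f_{z̄}(c))` equals `2π (|f_z(c)| + |f_{z̄}(c)|)`
for suitable `u`, `v`, whereas `F` and `G` are bounded through `∫ |u e^{-it} + v e^{it}| dt = 8`.
-/

section

open Complex
open scoped Real Topology Interval

variable {c u v z : ℂ} {f : ℂ → ℂ} {w w' : ℝ → ℂ} {r R M M₁ M₂ : ℝ}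

/-! ### Real analysis -/

lemma hasDerivAt_intervalIntegral_of_continuousOn {E : Type*} [NormedAddCommGroup E]
    [NormedSpace ℝ E] {F F' : ℝ → ℝ → E} {s : Set ℝ} {x₀ a b : ℝ} (hs : s ∈ 𝓝 x₀)
    (hF : ∀ x ∈ s, ContinuousOn (F x) [[a, b]])
    (hF' : ContinuousOn (Function.uncurry F') (s ×ˢ [[a, b]]))
    (hderiv : ∀ x ∈ s, ∀ t ∈ [[a, b]], HasDerivAt (F · t) (F' x t) x) :
    HasDerivAt (fun x => ∫ t in a..b, F x t) (∫ t in a..b, F' x₀ t) x₀ := by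
  obtain ⟨ε, hε, hball⟩ := nhds_basis_closedBall.mem_iff.1 hs
  have hε_nhds : closedBall x₀ ε ∈ 𝓝 x₀ := closedBall_mem_nhds x₀ hε
  obtain ⟨K, hK⟩ := ((isCompact_closedBall x₀ ε).prod isCompact_uIcc).exists_bound_of_continuousOn
    (hF'.mono (prod_mono_left hball))
  have hF'₀ : ContinuousOn (F' x₀) [[a, b]] :=
    hF'.comp (f := fun t => (x₀, t)) (by fun_prop) fun t ht => ⟨mem_of_mem_nhds hs, ht⟩
  refine (intervalIntegral.hasDerivAt_integral_of_dominated_loc_of_deriv_le (bound := fun _ => K)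
    hε_nhds ?_ (hF x₀ (mem_of_mem_nhds hs)).intervalIntegrable
    (hF'₀.mono uIoc_subset_uIcc |>.aestronglyMeasurable measurableSet_uIoc)
    (.of_forall fun t ht x hx => hK (x, t) ⟨hx, uIoc_subset_uIcc ht⟩)
    intervalIntegrable_const
    (.of_forall fun t ht x hx => hderiv x (hball hx) t (uIoc_subset_uIcc ht))).2
  filter_upwards [hs] with x hx
  exact (hF x hx).mono uIoc_subset_uIcc |>.aestronglyMeasurable measurableSet_uIoc

lemma norm_sub_smul_deriv_zero_le {E : Type*} [NormedAddCommGroup E] [NormedSpace ℝ E]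
    {F F' : ℝ → E} {K : ℝ} (hF : ∀ x ∈ Ico 0 R, HasDerivAt F (F' x) x)
    (hF₀ : F 0 = 0) (hK : ∀ x ∈ Ioo 0 R, ‖x • F' x - F x‖ ≤ K * x ^ 2) (hr : r ∈ Ioo 0 R) :
    ‖F r - r • F' 0‖ ≤ K * r ^ 2 := by
  have hR : 0 < R := hr.1.trans hr.2
  have hquot : ∀ x ∈ Ioo 0 R,
      HasDerivAt (fun y => y⁻¹ • F y) ((x ^ 2)⁻¹ • (x • F' x - F x)) x := by
    intro x hx
    refine ((hasDerivAt_inv hx.1.ne').fun_smul (hF x ⟨hx.1.le, hx.2⟩)).congr_deriv ?_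
    have hinv : (x ^ 2)⁻¹ * x = x⁻¹ := by field_simp [hx.1.ne']
    rw [smul_sub, smul_smul, hinv, neg_smul, sub_eq_add_neg]
  have hquot_le : ∀ x ∈ Ioo 0 R, ‖(x ^ 2)⁻¹ • (x • F' x - F x)‖ ≤ K := by
    intro x hx
    have hx2 : 0 < x ^ 2 := pow_pos hx.1 2
    rw [norm_smul, norm_inv, Real.norm_of_nonneg hx2.le, inv_mul_le_iff₀ hx2, mul_comm]
    exact hK x hx
  have hlip : ∀ᶠ x in 𝓝[>] (0 : ℝ), ‖r⁻¹ • F r - x⁻¹ • F x‖ ≤ K * ‖r - x‖ := by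
    filter_upwards [Ioo_mem_nhdsGT hR] with x hx
    exact (convex_Ioo 0 R).norm_image_sub_le_of_norm_hasDerivWithin_le
      (fun y hy => (hquot y hy).hasDerivWithinAt) hquot_le hx hr
  have hslope : Tendsto (fun x => x⁻¹ • F x) (𝓝[>] 0) (𝓝 (F' 0)) := by
    have := hasDerivAt_iff_tendsto_slope_zero.1 (hF 0 ⟨le_rfl, hR⟩)
    simp only [zero_add, hF₀, sub_zero] at this
    exact this.mono_left (nhdsGT_le_nhdsNE 0)
  have hdist : Tendsto (fun x => K * ‖r - x‖) (𝓝[>] 0) (𝓝 (K * r)) := by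
    have : Continuous fun x : ℝ => K * ‖r - x‖ := by fun_prop
    simpa [abs_of_pos hr.1] using (this.tendsto 0).mono_left nhdsWithin_le_nhds
  have hlim : ‖r⁻¹ • F r - F' 0‖ ≤ K * r :=
    le_of_tendsto_of_tendsto (tendsto_const_nhds.sub hslope).norm hdist hlip
  calc ‖F r - r • F' 0‖ = ‖r • (r⁻¹ • F r - F' 0)‖ := by
        rw [smul_sub, smul_inv_smul₀ hr.1.ne']
    _ = r * ‖r⁻¹ • F r - F' 0‖ := by rw [norm_smul, Real.norm_of_nonneg hr.1.le]
    _ ≤ r * (K * r) := mul_le_mul_of_nonneg_left hlim hr.1.le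
    _ = K * r ^ 2 := by ring

/-! ### Wirtinger derivatives and the polar form of the Laplacian -/

lemma fderiv_apply_eq_wdz_add_wdzbar (f : ℂ → ℂ) (z h : ℂ) :
    fderiv ℝ f z h = wdz f z * h + wdzbar f z * (starRingEnd ℂ) h := by
  have hlin : fderiv ℝ f z h = h.re * fderiv ℝ f z 1 + h.im * fderiv ℝ f z I := by
    conv_lhs => rw [show h = h.re • (1 : ℂ) + h.im • I by simp [re_add_im], map_add, map_smul,
      map_smul]
    simp only [real_smul]
  rw [hlin, wdz, wdzbar, re_eq_add_conj, im_eq_sub_conj]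
  field_simp
  linear_combination (h - (starRingEnd ℂ) h) * fderiv ℝ f z I * I_sq

lemma bilin_self_add_bilin_I_mul_self (B : ℂ →L[ℝ] ℂ →L[ℝ] ℂ) (z : ℂ) :
    B z z + B (I * z) (I * z) = ‖z‖ ^ 2 * (B 1 1 + B I I) := by
  have hz : z = z.re • (1 : ℂ) + z.im • I := by simp [re_add_im]
  have hIz : I * z = -z.im • (1 : ℂ) + z.re • I := by
    apply Complex.ext <;> simp
  have hnorm : (‖z‖ : ℂ) ^ 2 = z.re ^ 2 + z.im ^ 2 := by
    rw [← ofReal_pow, Complex.sq_norm, normSq_apply]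
    push_cast
    ring
  rw [hIz, hnorm]
  conv_lhs => enter [1]; rw [hz]
  simp only [map_add, map_smul, add_apply, smul_apply]
  simp only [real_smul]
  push_cast
  ring

lemma fderiv_fderiv_apply {A : ℂ → ℂ} {A' : ℂ →L[ℝ] ℂ}
    (hf : DifferentiableAt ℝ (fderiv ℝ f) z) (hA : HasFDerivAt A A' z) (h : ℂ) :
    fderiv ℝ (fun y => fderiv ℝ f y (A y)) z h =
      fderiv ℝ (fderiv ℝ f) z h (A z) + fderiv ℝ f z (A' h) := by
  rw [(hf.hasFDerivAt.clm_apply hA).fderiv]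
  simp [add_comm]

lemma lap_eq_fderiv_fderiv (hf : DifferentiableAt ℝ (fderiv ℝ f) z) :
    lap f z = fderiv ℝ (fderiv ℝ f) z 1 1 + fderiv ℝ (fderiv ℝ f) z I I := by
  simp [lap, fderiv_fderiv_apply hf (hasFDerivAt_const _ z)]

/-- The derivative of `f` along the linear vector field `z ↦ a (z - c)`. In polar coordinates
centred at `c` it is `r ∂_r` for `a = 1` and `∂_θ` for `a = I`. -/
def eulerDeriv (a c : ℂ) (f : ℂ → ℂ) (z : ℂ) : ℂ := fderiv ℝ f z (a * (z - c))

lemma contDiffOn_eulerDeriv {n : WithTop ℕ∞} {s : Set ℂ} (hs : IsOpen s)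
    (hf : ContDiffOn ℝ (n + 1) f s) (a c : ℂ) : ContDiffOn ℝ n (eulerDeriv a c f) s :=
  (hf.fderiv_of_isOpen hs le_rfl).clm_apply (by fun_prop)

lemma eulerDeriv_eulerDeriv (hf : DifferentiableAt ℝ (fderiv ℝ f) z) (a c : ℂ) :
    eulerDeriv a c (eulerDeriv a c f) z =
      fderiv ℝ (fderiv ℝ f) z (a * (z - c)) (a * (z - c)) +
        fderiv ℝ f z (a * (a * (z - c))) := by
  have hA : HasFDerivAt (fun y => a * (y - c)) (a • ContinuousLinearMap.id ℝ ℂ) z :=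
    ((hasFDerivAt_id z).sub_const c).const_mul a
  exact fderiv_fderiv_apply hf hA (a * (z - c))

lemma eulerDeriv_one_sq_add_eulerDeriv_I_sq (hf : DifferentiableAt ℝ (fderiv ℝ f) z) (c : ℂ) :
    eulerDeriv 1 c (eulerDeriv 1 c f) z + eulerDeriv I c (eulerDeriv I c f) z =
      ‖z - c‖ ^ 2 * lap f z := by
  have hI : I * (I * (z - c)) = -(z - c) := by rw [← mul_assoc, I_mul_I, neg_one_mul]
  rw [eulerDeriv_eulerDeriv hf, eulerDeriv_eulerDeriv hf, lap_eq_fderiv_fderiv hf,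
    ← bilin_self_add_bilin_I_mul_self, hI, map_neg]
  simp only [one_mul]
  ring

/-! ### Moments over circles -/

/-- The unnormalised moment of `f` against the angular weight `w` over the circle of centre `c` and
radius `r`. Negative radii are allowed, so that differentiability at `r = 0` makes sense. -/
def circleMoment (w : ℝ → ℂ) (f : ℂ → ℂ) (c : ℂ) (r : ℝ) : ℂ :=
  ∫ t in (0 : ℝ)..2 * π, w t * f (circleMap c r t)

lemma circleMap_mem_ball_of_abs_lt (c : ℂ) (hr : |r| < R) (t : ℝ) : circleMap c r t ∈ ball c R := by
  simpa [mem_ball, dist_eq_norm, circleMap_sub_center] using hr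

lemma continuous_mul_circleMap (hw : Continuous w) (hf : ContinuousOn f (ball c R))
    (hr : |r| < R) : Continuous fun t => w t * f (circleMap c r t) :=
  hw.mul (hf.comp_continuous (by fun_prop) (circleMap_mem_ball_of_abs_lt c hr))

lemma norm_circleMoment_le (hw : Continuous w) (hr : |r| < R)
    (hM : ∀ z ∈ ball c R, ‖f z‖ ≤ M) :
    ‖circleMoment w f c r‖ ≤ (∫ t in (0 : ℝ)..2 * π, ‖w t‖) * M := by
  rw [← intervalIntegral.integral_mul_const]
  refine intervalIntegral.norm_integral_le_of_norm_le Real.two_pi_pos.le (.of_forall fun t _ => ?_)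
    ((hw.norm.mul continuous_const).intervalIntegrable _ _)
  rw [norm_mul]
  gcongr
  exact hM _ (circleMap_mem_ball_of_abs_lt c hr t)

lemma hasDerivAt_circleMoment (hw : Continuous w) (hf : ContDiffOn ℝ 1 f (ball c R))
    (hr : |r| < R) :
    HasDerivAt (circleMoment w f c)
      (∫ t in (0 : ℝ)..2 * π, w t * fderiv ℝ f (circleMap c r t) (circleMap 0 1 t)) r := by
  have hs : {x : ℝ | |x| < R} ∈ 𝓝 r := (isOpen_lt continuous_abs continuous_const).mem_nhds hr
  refine hasDerivAt_intervalIntegral_of_continuousOn (F := fun x t => w t * f (circleMap c x t))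
    (F' := fun x t => w t * fderiv ℝ f (circleMap c x t) (circleMap 0 1 t)) hs
    (fun x hx => (continuous_mul_circleMap hw hf.continuousOn hx).continuousOn) ?_ ?_
  · have hDf : ContinuousOn (fun p : ℝ × ℝ => fderiv ℝ f (circleMap c p.1 p.2))
        ({x | |x| < R} ×ˢ [[0, 2 * π]]) :=
      (hf.continuousOn_fderiv_of_isOpen isOpen_ball le_rfl).comp
        (by unfold circleMap; fun_prop) fun p hp => circleMap_mem_ball_of_abs_lt c hp.1 p.2
    exact (hw.comp continuous_snd).continuousOn.mul (hDf.clm_apply (by fun_prop))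
  · intro x hx t _
    have hmap : HasDerivAt (fun y : ℝ => circleMap c y t) (circleMap 0 1 t) x := by
      simpa [circleMap] using ((hasDerivAt_id x).ofReal_comp.mul_const (exp (t * I))).const_add c
    have hfx : DifferentiableAt ℝ f (circleMap c x t) :=
      (hf.contDiffAt (isOpen_ball.mem_nhds (circleMap_mem_ball_of_abs_lt c hx t))).differentiableAt
        one_ne_zero
    exact (hfx.hasFDerivAt.comp_hasDerivAt x hmap).const_mul (w t)

lemma mul_deriv_circleMoment (hw : Continuous w) (hf : ContDiffOn ℝ 1 f (ball c R))
    (hr : |r| < R) :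
    r * deriv (circleMoment w f c) r = circleMoment w (eulerDeriv 1 c f) c r := by
  rw [(hasDerivAt_circleMoment hw hf hr).deriv, ← intervalIntegral.integral_const_mul]
  refine intervalIntegral.integral_congr fun t _ => ?_
  have hscale : circleMap 0 r t = r • circleMap 0 1 t := by simp [circleMap]
  simp only [eulerDeriv, one_mul, circleMap_sub_center, hscale, map_smul]
  rw [real_smul, mul_left_comm]

lemma circleMoment_eulerDeriv_I (hw : ∀ t, HasDerivAt w (w' t) t) (hw' : Continuous w')
    (hper : w (2 * π) = w 0) (hf : ContDiffOn ℝ 1 f (ball c R)) (hr : |r| < R) :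
    circleMoment w (eulerDeriv I c f) c r = -circleMoment w' f c r := by
  have hmem := circleMap_mem_ball_of_abs_lt c hr
  have hft (t : ℝ) : HasDerivAt (fun s => f (circleMap c r s))
      (eulerDeriv I c f (circleMap c r t)) t := by
    have hfx := (hf.contDiffAt (isOpen_ball.mem_nhds (hmem t))).differentiableAt one_ne_zero
    simpa [eulerDeriv, circleMap_sub_center, mul_comm, Function.comp_def]
      using hfx.hasFDerivAt.comp_hasDerivAt t (hasDerivAt_circleMap c r t)
  have hcont : Continuous fun t => eulerDeriv I c f (circleMap c r t) :=
    (contDiffOn_eulerDeriv (n := 0) isOpen_ball hf I c).continuousOn.comp_continuous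
      (by fun_prop) hmem
  have hclosed : circleMap c r (2 * π) = circleMap c r 0 := by
    simpa using periodic_circleMap c r 0
  simp only [circleMoment]
  rw [intervalIntegral.integral_mul_deriv_eq_deriv_mul (fun t _ => hw t) (fun t _ => hft t)
    (hw'.intervalIntegrable _ _) (hcont.intervalIntegrable _ _), hper, hclosed, sub_self, zero_sub]

/-! ### Weights of frequency one -/

/-- The general angular weight `u e^{-it} + v e^{it}` of frequency one; against it a circle moment
picks out `f_z` with coefficient `u` and `f_{z̄}` with coefficient `v`. -/
def freqOneWeight (u v : ℂ) (t : ℝ) : ℂ := u * exp (-(t * I)) + v * exp (t * I)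

lemma continuous_freqOneWeight (u v : ℂ) : Continuous (freqOneWeight u v) := by
  unfold freqOneWeight
  fun_prop

lemma freqOneWeight_two_pi (u v : ℂ) : freqOneWeight u v (2 * π) = freqOneWeight u v 0 := by
  simp [freqOneWeight, exp_neg]

lemma freqOneWeight_neg (u v : ℂ) (t : ℝ) : freqOneWeight (-u) (-v) t = -freqOneWeight u v t := by
  simp only [freqOneWeight]
  ring

lemma hasDerivAt_freqOneWeight (u v : ℂ) (t : ℝ) :
    HasDerivAt (freqOneWeight u v) (freqOneWeight (-(I * u)) (I * v) t) t := by
  have hlin : HasDerivAt (fun s : ℝ => (s : ℂ) * I) I t := by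
    simpa using (hasDerivAt_id t).ofReal_comp.mul_const I
  refine ((hlin.fun_neg.cexp.const_mul u).fun_add (hlin.cexp.const_mul v)).congr_deriv ?_
  simp only [freqOneWeight]
  ring

lemma circleMoment_freqOneWeight_eulerDeriv_I_sq (hf : ContDiffOn ℝ 2 f (ball c R))
    (hr : |r| < R) :
    circleMoment (freqOneWeight u v) (eulerDeriv I c (eulerDeriv I c f)) c r =
      -circleMoment (freqOneWeight u v) f c r := by
  have hswap {u v : ℂ} {g : ℂ → ℂ} (hg : ContDiffOn ℝ 1 g (ball c R)) :
      circleMoment (freqOneWeight u v) (eulerDeriv I c g) c r =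
        -circleMoment (freqOneWeight (-(I * u)) (I * v)) g c r :=
    circleMoment_eulerDeriv_I (hasDerivAt_freqOneWeight u v) (continuous_freqOneWeight _ _)
      (freqOneWeight_two_pi u v) hg hr
  have hsq : freqOneWeight (-(I * -(I * u))) (I * (I * v)) = freqOneWeight (-u) (-v) := by
    congr 1 <;> simp [← mul_assoc]
  rw [hswap (contDiffOn_eulerDeriv isOpen_ball hf I c), hswap (hf.of_le one_le_two), hsq, neg_neg]
  simp [circleMoment, freqOneWeight_neg]

lemma circleMoment_freqOneWeight_eulerDeriv_one_sq (hf : ContDiffOn ℝ 2 f (ball c R))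
    (hr : |r| < R) :
    circleMoment (freqOneWeight u v) (eulerDeriv 1 c (eulerDeriv 1 c f)) c r =
      circleMoment (freqOneWeight u v) f c r +
        r ^ 2 * circleMoment (freqOneWeight u v) (lap f) c r := by
  have hint (a : ℂ) : IntervalIntegrable (fun t => freqOneWeight u v t *
      eulerDeriv a c (eulerDeriv a c f) (circleMap c r t)) volume 0 (2 * π) := by
    have heuler : ContDiffOn ℝ 1 (eulerDeriv a c f) (ball c R) :=
      contDiffOn_eulerDeriv isOpen_ball hf a c
    have heuler_sq := contDiffOn_eulerDeriv (n := 0) isOpen_ball heuler a c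
    exact (continuous_mul_circleMap (continuous_freqOneWeight u v) heuler_sq.continuousOn
      hr).intervalIntegrable _ _
  have hpolar (t : ℝ) : eulerDeriv 1 c (eulerDeriv 1 c f) (circleMap c r t) +
      eulerDeriv I c (eulerDeriv I c f) (circleMap c r t) = r ^ 2 * lap f (circleMap c r t) := by
    have hD : DifferentiableAt ℝ (fderiv ℝ f) (circleMap c r t) :=
      ((hf.fderiv_of_isOpen (m := 1) isOpen_ball le_rfl).contDiffAt (isOpen_ball.mem_nhds
        (circleMap_mem_ball_of_abs_lt c hr t))).differentiableAt one_ne_zero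
    rw [eulerDeriv_one_sq_add_eulerDeriv_I_sq hD, circleMap_sub_center, norm_circleMap_zero,
      ← ofReal_pow, sq_abs, ofReal_pow]
  have hsum : circleMoment (freqOneWeight u v) (eulerDeriv 1 c (eulerDeriv 1 c f)) c r +
      circleMoment (freqOneWeight u v) (eulerDeriv I c (eulerDeriv I c f)) c r =
        r ^ 2 * circleMoment (freqOneWeight u v) (lap f) c r := by
    simp only [circleMoment]
    rw [← intervalIntegral.integral_add (hint 1) (hint I), ← intervalIntegral.integral_const_mul]
    simp only [← mul_add, hpolar, mul_left_comm]
  rw [circleMoment_freqOneWeight_eulerDeriv_I_sq hf hr] at hsum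
  linear_combination hsum

lemma hasDerivAt_mul_circleMoment_eulerDeriv_sub (hf : ContDiffOn ℝ 2 f (ball c R))
    (hr : |r| < R) :
    HasDerivAt (fun ρ : ℝ => ρ * (circleMoment (freqOneWeight u v) (eulerDeriv 1 c f) c ρ -
        circleMoment (freqOneWeight u v) f c ρ))
      (r ^ 2 * circleMoment (freqOneWeight u v) (lap f) c r) r := by
  have hw := continuous_freqOneWeight u v
  have hf₁ : ContDiffOn ℝ 1 f (ball c R) := hf.of_le one_le_two
  have heuler : ContDiffOn ℝ 1 (eulerDeriv 1 c f) (ball c R) :=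
    contDiffOn_eulerDeriv isOpen_ball hf 1 c
  refine ((hasDerivAt_id r).ofReal_comp.fun_mul
    ((hasDerivAt_circleMoment hw heuler hr).differentiableAt.hasDerivAt.fun_sub
      (hasDerivAt_circleMoment hw hf₁ hr).differentiableAt.hasDerivAt)).congr_deriv ?_
  have hmul_deriv := mul_deriv_circleMoment hw heuler hr
  rw [circleMoment_freqOneWeight_eulerDeriv_one_sq hf hr] at hmul_deriv
  simp only [id_eq, ofReal_one, one_mul]
  linear_combination hmul_deriv - mul_deriv_circleMoment hw hf₁ hr

lemma integral_exp_int_mul_I {n : ℤ} (hn : n ≠ 0) :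
    ∫ t in (0 : ℝ)..2 * π, exp (n * I * t) = 0 := by
  rw [integral_exp_mul_complex (mul_ne_zero (mod_cast hn) I_ne_zero)]
  have hperiod : exp (n * I * (2 * π : ℝ)) = 1 :=
    exp_eq_one_iff.2 ⟨n, by push_cast; ring⟩
  rw [hperiod, ofReal_zero, mul_zero, exp_zero, sub_self, zero_div]

lemma circleMoment_freqOneWeight_zero (u v : ℂ) (f : ℂ → ℂ) (c : ℂ) :
    circleMoment (freqOneWeight u v) f c 0 = 0 := by
  have hweight (t : ℝ) :
      freqOneWeight u v t = u * exp ((-1 : ℤ) * I * t) + v * exp ((1 : ℤ) * I * t) := by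
    simp [freqOneWeight, mul_comm]
  simp only [circleMoment, circleMap_zero_radius, Function.const_apply, hweight]
  rw [intervalIntegral.integral_mul_const, intervalIntegral.integral_add,
    intervalIntegral.integral_const_mul, intervalIntegral.integral_const_mul,
    integral_exp_int_mul_I (by norm_num), integral_exp_int_mul_I (by norm_num)]
  · simp only [mul_zero, add_zero, zero_mul]
  all_goals exact Continuous.intervalIntegrable (by fun_prop) _ _

lemma deriv_circleMoment_freqOneWeight_zero (hf : ContDiffOn ℝ 1 f (ball c R)) (hR : 0 < R) :
    deriv (circleMoment (freqOneWeight u v) f c) 0 = 2 * π * (u * wdz f c + v * wdzbar f c) := by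
  have hexpand (t : ℝ) :
      freqOneWeight u v t * fderiv ℝ f (circleMap c 0 t) (circleMap 0 1 t) =
        (u * wdz f c + v * wdzbar f c) + u * wdzbar f c * exp ((-2 : ℤ) * I * t) +
          v * wdz f c * exp ((2 : ℤ) * I * t) := by
    have hconj : (starRingEnd ℂ) (exp (t * I)) = exp (-(t * I)) := by
      rw [← exp_conj]; simp
    have hinv : exp (t * I) * exp (-(t * I)) = 1 := by rw [← exp_add]; simp
    have hpos : exp ((2 : ℤ) * I * t) = exp (t * I) * exp (t * I) := by
      rw [← exp_add]; push_cast; ring_nf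
    have hneg : exp ((-2 : ℤ) * I * t) = exp (-(t * I)) * exp (-(t * I)) := by
      rw [← exp_add]; push_cast; ring_nf
    rw [fderiv_apply_eq_wdz_add_wdzbar, hpos, hneg]
    simp only [freqOneWeight, circleMap_zero_radius, Function.const_apply, circleMap_zero,
      ofReal_one, one_mul, hconj]
    linear_combination (u * wdz f c + v * wdzbar f c) * hinv
  rw [(hasDerivAt_circleMoment (continuous_freqOneWeight u v) hf (by simpa using hR)).deriv]
  simp only [hexpand]
  rw [intervalIntegral.integral_add, intervalIntegral.integral_add,
    intervalIntegral.integral_const_mul, intervalIntegral.integral_const_mul,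
    integral_exp_int_mul_I (by norm_num), integral_exp_int_mul_I (by norm_num)]
  · simp only [intervalIntegral.integral_const, sub_zero, mul_zero, add_zero, real_smul]
    push_cast
    ring
  all_goals exact Continuous.intervalIntegrable (by fun_prop) _ _

lemma integral_abs_cos_add (x : ℝ) : ∫ t in (0 : ℝ)..2 * π, |Real.cos (t + x)| = 4 := by
  have hper : Function.Periodic (fun t => |Real.cos t|) (2 * π) := fun t => by
    simp only [Real.cos_add_two_pi]
  have hint (a b : ℝ) : IntervalIntegrable (fun t => |Real.cos t|) volume a b :=
    Real.continuous_cos.abs.intervalIntegrable a b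
  have hpos : ∫ t in (-(π / 2))..π / 2, |Real.cos t| = 2 := by
    rw [intervalIntegral.integral_congr (g := Real.cos), integral_cos]
    · norm_num
    · intro t ht
      rw [uIcc_of_le (by linarith [Real.pi_pos])] at ht
      exact abs_of_nonneg (Real.cos_nonneg_of_mem_Icc ht)
  have hneg : ∫ t in (π / 2)..π / 2 + π, |Real.cos t| = 2 := by
    have hshift := intervalIntegral.integral_comp_add_right (a := -(π / 2)) (b := π / 2)
      (fun t => |Real.cos t|) π
    simp only [Real.cos_add_pi, abs_neg] at hshift
    rw [hpos, show -(π / 2) + π = π / 2 by ring] at hshift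
    exact hshift.symm
  rw [intervalIntegral.integral_comp_add_right (fun t => |Real.cos t|), zero_add,
    add_comm (2 * π), hper.intervalIntegral_add_eq x (-(π / 2)),
    ← intervalIntegral.integral_add_adjacent_intervals (hint _ (π / 2)) (hint _ _),
    show -(π / 2) + 2 * π = π / 2 + π by ring, hpos, hneg]
  norm_num

lemma integral_norm_freqOneWeight (hu : ‖u‖ = 1) (hv : ‖v‖ = 1) :
    ∫ t in (0 : ℝ)..2 * π, ‖freqOneWeight u v t‖ = 8 := by
  obtain ⟨α, rfl⟩ := (norm_eq_one_iff u).1 hu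
  obtain ⟨β, rfl⟩ := (norm_eq_one_iff v).1 hv
  have hnorm (t : ℝ) : ‖freqOneWeight (exp (α * I)) (exp (β * I)) t‖ =
      2 * |Real.cos (t + (β - α) / 2)| := by
    have hfactor : freqOneWeight (exp (α * I)) (exp (β * I)) t =
        exp (((α + β) / 2 : ℝ) * I) * (2 * Real.cos (t + (β - α) / 2) : ℝ) := by
      push_cast
      rw [freqOneWeight, two_cos, mul_add, ← exp_add, ← exp_add, ← exp_add, ← exp_add, add_comm]
      ring_nf
    rw [hfactor, norm_mul, norm_exp_ofReal_mul_I, one_mul, norm_real, Real.norm_eq_abs, abs_mul,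
      abs_two]
  simp only [hnorm, intervalIntegral.integral_const_mul, integral_abs_cos_add]
  norm_num

/-! ### The estimate at the centre -/

lemma norm_circleMoment_eulerDeriv_sub_le (hu : ‖u‖ = 1) (hv : ‖v‖ = 1)
    (hf : ContDiffOn ℝ 2 f (ball c R)) (hM : ∀ z ∈ ball c R, ‖lap f z‖ ≤ M) (hr : r ∈ Ioo 0 R) :
    ‖circleMoment (freqOneWeight u v) (eulerDeriv 1 c f) c r -
      circleMoment (freqOneWeight u v) f c r‖ ≤ 8 * M / 3 * r ^ 2 := by
  set D : ℝ → ℂ := fun ρ => circleMoment (freqOneWeight u v) (eulerDeriv 1 c f) c ρ -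
    circleMoment (freqOneWeight u v) f c ρ
  have habs {ρ : ℝ} (hρ₀ : 0 ≤ ρ) (hρ : ρ ≤ r) : |ρ| < R := by
    rw [abs_of_nonneg hρ₀]
    exact hρ.trans_lt hr.2
  have hderiv (ρ : ℝ) (hρ₀ : 0 ≤ ρ) (hρ : ρ ≤ r) : HasDerivAt (fun ρ : ℝ => ρ * D ρ)
      (ρ ^ 2 * circleMoment (freqOneWeight u v) (lap f) c ρ) ρ :=
    hasDerivAt_mul_circleMoment_eulerDeriv_sub hf (habs hρ₀ hρ)
  have hderiv_le (ρ : ℝ) (hρ : ρ ∈ Ico 0 r) :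
      ‖(ρ : ℂ) ^ 2 * circleMoment (freqOneWeight u v) (lap f) c ρ‖ ≤ 8 * M * ρ ^ 2 := by
    have hG := norm_circleMoment_le (continuous_freqOneWeight u v) (habs hρ.1 hρ.2.le) hM
    rw [integral_norm_freqOneWeight hu hv] at hG
    rw [norm_mul, norm_pow, norm_real, Real.norm_eq_abs, sq_abs, mul_comm]
    gcongr
  have hcube (ρ : ℝ) : HasDerivAt (fun ρ => 8 * M / 3 * ρ ^ 3) (8 * M * ρ ^ 2) ρ :=
    ((hasDerivAt_pow 3 ρ).const_mul (8 * M / 3)).congr_deriv (by push_cast; ring)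
  have hmul : ‖(r : ℂ) * D r‖ ≤ 8 * M / 3 * r ^ 3 :=
    image_norm_le_of_norm_deriv_right_le_deriv_boundary
      (fun ρ hρ => (hderiv ρ hρ.1 hρ.2).continuousAt.continuousWithinAt)
      (fun ρ hρ => (hderiv ρ hρ.1 hρ.2.le).hasDerivWithinAt) (by simp) hcube hderiv_le
      (right_mem_Icc.2 hr.1.le)
  rw [norm_mul, norm_real, Real.norm_of_nonneg hr.1.le] at hmul
  refine le_of_mul_le_mul_left (hmul.trans_eq ?_) hr.1
  ring

lemma mul_norm_wdz_add_norm_wdzbar_le (hf : ContDiffOn ℝ 2 f (ball c R))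
    (hlap : ∀ z ∈ ball c R, ‖lap f z‖ ≤ M₁) (hbound : ∀ z ∈ ball c R, ‖f z‖ ≤ M₂)
    (hr : r ∈ Ioo 0 R) :
    r * (2 * π * (‖wdz f c‖ + ‖wdzbar f c‖)) ≤ 8 * M₂ + 8 * M₁ / 3 * r ^ 2 := by
  obtain ⟨u, hu, hup⟩ := exists_norm_eq_mul_self (wdz f c)
  obtain ⟨v, hv, hvq⟩ := exists_norm_eq_mul_self (wdzbar f c)
  have hw := continuous_freqOneWeight u v
  have hf₁ : ContDiffOn ℝ 1 f (ball c R) := hf.of_le one_le_two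
  have habs {ρ : ℝ} (hρ : ρ ∈ Ico 0 R) : |ρ| < R := by simpa [abs_of_nonneg hρ.1] using hρ.2
  set F := circleMoment (freqOneWeight u v) f c with hF
  have hF'₀ : deriv F 0 = (2 * π * (‖wdz f c‖ + ‖wdzbar f c‖) : ℝ) := by
    rw [hF, deriv_circleMoment_freqOneWeight_zero hf₁ (hr.1.trans hr.2), ← hup, ← hvq]
    push_cast
    ring
  have hFr : ‖F r‖ ≤ 8 * M₂ := by
    rw [← integral_norm_freqOneWeight hu hv]
    exact norm_circleMoment_le hw (habs ⟨hr.1.le, hr.2⟩) hbound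
  have hdefect (ρ : ℝ) (hρ : ρ ∈ Ioo 0 R) : ‖ρ • deriv F ρ - F ρ‖ ≤ 8 * M₁ / 3 * ρ ^ 2 := by
    rw [real_smul, mul_deriv_circleMoment hw hf₁ (habs ⟨hρ.1.le, hρ.2⟩)]
    exact norm_circleMoment_eulerDeriv_sub_le hu hv hf hlap hρ
  have hTaylor : ‖F r - r • deriv F 0‖ ≤ 8 * M₁ / 3 * r ^ 2 :=
    norm_sub_smul_deriv_zero_le
      (fun ρ hρ => (hasDerivAt_circleMoment hw hf₁ (habs hρ)).differentiableAt.hasDerivAt)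
      (circleMoment_freqOneWeight_zero u v f c) hdefect hr
  calc r * (2 * π * (‖wdz f c‖ + ‖wdzbar f c‖)) = ‖r • deriv F 0‖ := by
        rw [norm_smul, hF'₀, norm_real, Real.norm_of_nonneg hr.1.le,
          Real.norm_of_nonneg (by positivity)]
    _ ≤ ‖F r‖ + ‖F r - r • deriv F 0‖ := norm_le_norm_add_norm_sub _ _
    _ ≤ 8 * M₂ + 8 * M₁ / 3 * r ^ 2 := add_le_add hFr hTaylor

lemma norm_wdz_add_norm_wdzbar_le (hR : 0 < R) (hf : ContDiffOn ℝ 2 f (ball c R))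
    (hlap : ∀ z ∈ ball c R, ‖lap f z‖ ≤ M₁) (hbound : ∀ z ∈ ball c R, ‖f z‖ ≤ M₂) :
    ‖wdz f c‖ + ‖wdzbar f c‖ ≤ 4 / π * (M₂ / R + R * M₁ / 3) := by
  set S := ‖wdz f c‖ + ‖wdzbar f c‖
  have hclosure : R * (2 * π * S) ≤ 8 * M₂ + 8 * M₁ / 3 * R ^ 2 := by
    have hR_mem : R ∈ closure (Ioo 0 R) := by
      rw [closure_Ioo hR.ne]
      exact right_mem_Icc.2 hR.le
    exact le_on_closure (f := fun r => r * (2 * π * S))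
      (g := fun r => 8 * M₂ + 8 * M₁ / 3 * r ^ 2)
      (fun r hr => mul_norm_wdz_add_norm_wdzbar_le hf hlap hbound hr)
      (by fun_prop) (by fun_prop) hR_mem
  refine le_of_mul_le_mul_left ?_ (by positivity : 0 < R * (2 * π))
  calc R * (2 * π) * S = R * (2 * π * S) := mul_assoc ..
    _ ≤ 8 * M₂ + 8 * M₁ / 3 * R ^ 2 := hclosure
    _ = R * (2 * π) * (4 / π * (M₂ / R + R * M₁ / 3)) := by field_simp; ring

lemma four_div_pi_le_two : 4 / π ≤ 2 := by
  rw [div_le_iff₀ Real.pi_pos]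
  linarith [Real.two_le_pi]

end

theorem stmt14_general {f : ℂ → ℂ} {c : ℂ} {R M₁ M₂ : ℝ} (hR : 0 < R)
    (hf : ContDiffOn ℝ 2 f (ball c R)) (hlap : ∀ z ∈ ball c R, ‖lap f z‖ ≤ M₁)
    (hbound : ∀ z ∈ ball c R, ‖f z‖ ≤ M₂) (hJ : ‖wdz f c‖ ^ 2 - ‖wdzbar f c‖ ^ 2 = 1) :
    1 / (4 / Real.pi * (M₂ / R + R * M₁ / 3)) ≤ |‖wdz f c‖ - ‖wdzbar f c‖| := by
  set S := ‖wdz f c‖ + ‖wdzbar f c‖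
  have hS_le := norm_wdz_add_norm_wdzbar_le hR hf hlap hbound
  have hfactor : (‖wdz f c‖ - ‖wdzbar f c‖) * S = 1 := by
    rw [← hJ]
    ring
  have hS_pos : 0 < S := (by positivity : 0 ≤ S).lt_of_ne' (right_ne_zero_of_mul_eq_one hfactor)
  calc 1 / (4 / Real.pi * (M₂ / R + R * M₁ / 3)) ≤ 1 / S := one_div_le_one_div_of_le hS_pos hS_le
    _ = ‖wdz f c‖ - ‖wdzbar f c‖ := (eq_one_div_of_mul_eq_one_left hfactor).symm
    _ ≤ |‖wdz f c‖ - ‖wdzbar f c‖| := le_abs_self _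

/-- Lower bound on `λ(D_f(0)) = ||f_z(0)| - |f_{z̄}(0)||` for normalized solutions of
the Poisson equation. -/
theorem stmt14 (M₁ M₂ : ℝ) (hM₁ : 0 ≤ M₁) (hM₂ : 0 < M₂) (g f : ℂ → ℂ)
    (hg : ContinuousOn g (closedBall (0:ℂ) 1))
    (hf2 : ContDiffOn ℝ 2 f (ball (0:ℂ) 1))
    (hfc : ContinuousOn f (closedBall (0:ℂ) 1))
    (hfg : ∀ z ∈ ball (0:ℂ) 1, lap f z = g z)
    (hf0 : f 0 = 0)
    (hJ : ‖wdz f 0‖ ^ 2 - ‖wdzbar f 0‖ ^ 2 = 1)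
    (hgb : ∀ z ∈ ball (0:ℂ) 1, ‖g z‖ ≤ M₁)
    (hfb : ∀ z ∈ ball (0:ℂ) 1, ‖f z‖ ≤ M₂) :
    |‖wdz f 0‖ - ‖wdzbar f 0‖| ≥ 1 / (4 / Real.pi * M₂ + 2 / 3 * M₁) := by
  refine (one_div_le_one_div_of_le (by positivity) ?_).trans
    (stmt14_general one_pos hf2 (fun z hz => hfg z hz ▸ hgb z hz) hfb hJ)
  linarith [mul_le_mul_of_nonneg_right four_div_pi_le_two hM₁]
end
end

section
/- For each positive integer k, define f_k : 𝔻 → ℂ by f_k(x+iy) = kx + i·y/k. Then each f_k is harmonic and injective on 𝔻, with f_k(0) = 0 and J_{f_k}(0) = 1, and every open disk contained in the image f_k(𝔻) has radius at most 1/k. Consequently there is no constant r₀ > 0 such that 𝔻_{r₀} ⊆ f_k(𝔻) for all k. -/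
open Metric MeasureTheory Set Filter

noncomputable section

/-!
The mapping `f_k` is real-linear and scales the axes by `k` and `1 / k`, so its Jacobian, the
determinant of its derivative, is `k * (1 / k) = 1`. The composition `Im ∘ f_k` is a functional of
norm `1 / k`, so `f_k(𝔻)` lies in a strip of half-width `1 / k`, which cannot contain a disk of
larger radius because `Im` maps a disk of radius `ρ` onto an interval of length `2 * ρ`.
-/

section BallsInImages

variable {E F G : Type*} [SeminormedAddCommGroup E] [NormedSpace ℝ E]
  [NormedAddCommGroup F] [NormedSpace ℝ F] [SeminormedAddCommGroup G] [NormedSpace ℝ G]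

theorem opNorm_mul_radius_le_of_mapsTo_closedBall {φ : F →L[ℝ] G} {c : F} {y : G} {ρ b : ℝ}
    (hb : 0 ≤ b) (hφ : MapsTo φ (ball c ρ) (closedBall y b)) :
    ‖φ‖ * ρ ≤ b := by
  rcases le_or_gt ρ 0 with hρ | hρ
  · exact (mul_nonpos_of_nonneg_of_nonpos (norm_nonneg φ) hρ).trans hb
  by_contra! hlt
  obtain ⟨x, hx, hbx⟩ := φ.exists_lt_apply_of_lt_opNorm ((div_lt_iff₀ hρ).2 hlt)
  have hρx : ‖ρ • x‖ < ρ := by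
    simpa [norm_smul, abs_of_pos hρ] using mul_lt_mul_of_pos_left hx hρ
  have hadd : dist (φ (c + ρ • x)) y ≤ b := hφ (by simpa using hρx)
  have hsub : dist (φ (c - ρ • x)) y ≤ b := hφ (by simpa [dist_eq_norm] using hρx)
  have hdist : dist (φ (c + ρ • x)) (φ (c - ρ • x)) = 2 * (ρ * ‖φ x‖) := by
    rw [dist_eq_norm, ← map_sub, add_sub_sub_cancel, ← two_smul ℝ (ρ • x), map_smul, map_smul,
      norm_smul, norm_smul, Real.norm_two, Real.norm_of_nonneg hρ.le]
  have htri := dist_triangle_right (φ (c + ρ • x)) (φ (c - ρ • x)) y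
  have hbρ : b < ‖φ x‖ * ρ := (div_lt_iff₀ hρ).1 hbx
  linarith

theorem opNorm_mul_radius_le_of_ball_subset_image_ball {T : E →L[ℝ] F} {c : F} {d : E} {ρ r : ℝ}
    (hr : 0 ≤ r) (h : ball c ρ ⊆ T '' ball d r) (φ : F →L[ℝ] G) :
    ‖φ‖ * ρ ≤ ‖φ.comp T‖ * r := by
  refine opNorm_mul_radius_le_of_mapsTo_closedBall (c := c) (y := φ (T d)) (by positivity) ?_
  intro w hw
  obtain ⟨z, hz, rfl⟩ := h hw
  exact ((φ.comp T).dist_le_opNorm z d).trans (by gcongr; exact (mem_ball.1 hz).le)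

end BallsInImages

theorem det_eq_re_mul_im_sub_im_mul_re (L : ℂ →L[ℝ] ℂ) :
    L.det = (L 1).re * (L Complex.I).im - (L 1).im * (L Complex.I).re := by
  rw [ContinuousLinearMap.det, ← LinearMap.det_toMatrix Complex.basisOneI, Matrix.det_fin_two]
  simp [LinearMap.toMatrix_apply, mul_comm]

theorem norm_wdz_sq_sub_norm_wdzbar_sq (f : ℂ → ℂ) (z : ℂ) :
    ‖wdz f z‖ ^ 2 - ‖wdzbar f z‖ ^ 2 = (fderiv ℝ f z).det := by
  rw [det_eq_re_mul_im_sub_im_mul_re, wdz, wdzbar, Complex.sq_norm, Complex.sq_norm, map_div₀,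
    map_div₀, Complex.normSq_ofNat]
  simp only [Complex.normSq_apply, Complex.sub_re, Complex.sub_im, Complex.add_re, Complex.add_im,
    Complex.mul_re, Complex.mul_im, Complex.I_re, Complex.I_im]
  ring

theorem lap_continuousLinearMap (L : ℂ →L[ℝ] ℂ) (z : ℂ) : lap L z = 0 := by
  simp [lap]

/-- The real-linear map `x + iy ↦ a x + i b y` scaling the two coordinate axes; the mapping `f_k` is
the case `a = k`, `b = 1 / k`. -/
def axialScaling (a b : ℝ) : ℂ →L[ℝ] ℂ :=
  a • Complex.ofRealCLM.comp Complex.reCLM + (b * Complex.I) • Complex.ofRealCLM.comp Complex.imCLM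

namespace axialScaling

variable (a b : ℝ)

@[simp]
theorem apply_re (z : ℂ) : (axialScaling a b z).re = a * z.re := by
  simp [axialScaling]

@[simp]
theorem apply_im (z : ℂ) : (axialScaling a b z).im = b * z.im := by
  simp [axialScaling]

theorem det_eq_mul : (axialScaling a b).det = a * b := by
  simp [det_eq_re_mul_im_sub_im_mul_re]

theorem norm_imCLM_comp : ‖Complex.imCLM.comp (axialScaling a b)‖ = |b| := by
  have hcomp : Complex.imCLM.comp (axialScaling a b) = b • Complex.imCLM :=
    ContinuousLinearMap.ext fun z => by simp
  rw [hcomp, norm_smul, Complex.imCLM_norm, mul_one, Real.norm_eq_abs]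

variable {a b}

theorem injective (ha : a ≠ 0) (hb : b ≠ 0) : Function.Injective (axialScaling a b) := by
  intro z w h
  apply Complex.ext
  · simpa [ha] using congrArg Complex.re h
  · simpa [hb] using congrArg Complex.im h

theorem radius_le_of_ball_subset_image_ball {c d : ℂ} {ρ r : ℝ} (hr : 0 ≤ r)
    (h : ball c ρ ⊆ axialScaling a b '' ball d r) : ρ ≤ |b| * r := by
  simpa [norm_imCLM_comp] using
    opNorm_mul_radius_le_of_ball_subset_image_ball hr h Complex.imCLM

end axialScaling

theorem stmt17_general {ι : Type*} (k : ι → ℝ) (hk : ¬ BddAbove (range k)) (f : ι → ℂ → ℂ)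
    (hf : ∀ i z, f i z = (k i : ℂ) * (z.re : ℂ) + Complex.I * (z.im / k i : ℝ)) :
    (∀ i, 0 < k i →
      ContDiffOn ℝ 2 (f i) (ball (0:ℂ) 1) ∧
      (∀ z ∈ ball (0:ℂ) 1, lap (f i) z = 0) ∧
      Set.InjOn (f i) (ball (0:ℂ) 1) ∧
      f i 0 = 0 ∧
      ‖wdz (f i) 0‖ ^ 2 - ‖wdzbar (f i) 0‖ ^ 2 = 1 ∧
      (∀ (c : ℂ) (ρ : ℝ), ball c ρ ⊆ f i '' ball (0:ℂ) 1 → ρ ≤ 1 / k i)) ∧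
    ¬ ∃ r₀ : ℝ, 0 < r₀ ∧ ∀ i, 0 < k i → ball (0:ℂ) r₀ ⊆ f i '' ball (0:ℂ) 1 := by
  obtain rfl : f = fun i => ⇑(axialScaling (k i) (k i)⁻¹) := by
    funext i z
    apply Complex.ext
    · simp [hf, -Complex.ofReal_div]
    · simp [hf, -Complex.ofReal_div, inv_mul_eq_div]
  have radius_le (i : ι) (hi : 0 < k i) (c : ℂ) (ρ : ℝ)
      (h : ball c ρ ⊆ axialScaling (k i) (k i)⁻¹ '' ball 0 1) : ρ ≤ 1 / k i := by
    simpa [abs_of_pos hi] using axialScaling.radius_le_of_ball_subset_image_ball zero_le_one h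
  refine ⟨fun i hi => ⟨(ContinuousLinearMap.contDiff _).contDiffOn,
    fun z _ => lap_continuousLinearMap _ z,
    (axialScaling.injective hi.ne' (inv_ne_zero hi.ne')).injOn, map_zero _, ?_, radius_le i hi⟩, ?_⟩
  · rw [norm_wdz_sq_sub_norm_wdzbar_sq, ContinuousLinearMap.fderiv, axialScaling.det_eq_mul,
      mul_inv_cancel₀ hi.ne']
  · rintro ⟨r₀, hr₀, h⟩
    obtain ⟨_, ⟨i, rfl⟩, hlt⟩ := not_bddAbove_iff.1 hk (1 / r₀)
    have hi : 0 < k i := (one_div_pos.2 hr₀).trans hlt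
    exact (radius_le i hi 0 r₀ (h i hi)).not_gt ((one_div_lt hr₀ hi).1 hlt)

/-- Example 1.10: the harmonic mappings `f_k(x+iy) = kx + iy/k` show the failure of a
uniform Landau type theorem. -/
theorem stmt17 (f : ℕ → ℂ → ℂ)
    (hf : ∀ k : ℕ, ∀ z : ℂ, f k z = (k : ℂ) * (z.re : ℂ) + Complex.I * ((z.im : ℝ) / k : ℝ)) :
    (∀ k : ℕ, 0 < k →
      ContDiffOn ℝ 2 (f k) (ball (0:ℂ) 1) ∧
      (∀ z ∈ ball (0:ℂ) 1, lap (f k) z = 0) ∧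
      Set.InjOn (f k) (ball (0:ℂ) 1) ∧
      f k 0 = 0 ∧
      ‖wdz (f k) 0‖ ^ 2 - ‖wdzbar (f k) 0‖ ^ 2 = 1 ∧
      (∀ (c : ℂ) (ρ : ℝ), ball c ρ ⊆ f k '' ball (0:ℂ) 1 → ρ ≤ 1 / k)) ∧
    ¬ ∃ r₀ : ℝ, 0 < r₀ ∧ ∀ k : ℕ, 0 < k → ball (0:ℂ) r₀ ⊆ f k '' ball (0:ℂ) 1 := by
  exact_mod_cast stmt17_general (fun k : ℕ => (k : ℝ))
    (not_bddAbove_of_tendsto_atTop tendsto_natCast_atTop_atTop) f (by simpa using hf)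
end
end

section
/- For each positive integer k, define f_k : 𝔻 → ℂ by f_k(x+iy) = kx + |x+iy|²/4 + i·y/k. Then each f_k satisfies Δf_k ≡ 1 on 𝔻, is injective on 𝔻, and satisfies f_k(0) = 0 and J_{f_k}(0) = 1; and there is no constant ρ₀ > 0 such that 𝔻_{ρ₀} ⊆ f_k(𝔻) for all k. -/
open Metric MeasureTheory Set Filter

noncomputable section

/-!
Write `f_k = L_k + |z|²/4` with `L_k` the real-linear stretch `x + iy ↦ kx + iy/k`. A linear map is
harmonic, so `Δf_k = Δ(|z|²/4) = 1`; the quadratic term has zero derivative at the origin, so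
`J_{f_k}(0) = det L_k = 1`. The imaginary part `y/k` of `f_k` determines `y`, and for fixed `y` the
real part is a parabola in `x` with vertex `-2k`, outside the disk. Finally `f_k(𝔻)` lies in the
strip `|Im w| ≤ 1/k`, which contains no disk of radius larger than `1/k`.
-/

theorem det_eq_re_mul_im_sub (L : ℂ →L[ℝ] ℂ) :
    L.det = (L 1).re * (L Complex.I).im - (L Complex.I).re * (L 1).im := by
  rw [ContinuousLinearMap.det, ← LinearMap.det_toMatrix Complex.basisOneI, Matrix.det_fin_two]
  simp [LinearMap.toMatrix_apply]

/-- The map `z ↦ L z + |z|²/4`: a real-linear map plus a radial solution of `Δu = 1`.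
The `f_k` of the theorem are obtained for `L = stretch k k⁻¹`. -/
def quadraticPerturbation (L : ℂ →L[ℝ] ℂ) (z : ℂ) : ℂ :=
  L z + ((‖z‖ ^ 2 / 4 : ℝ) : ℂ)

section QuadraticPerturbation

variable (L : ℂ →L[ℝ] ℂ)

theorem quadraticPerturbation_zero : quadraticPerturbation L 0 = 0 := by
  simp [quadraticPerturbation]

theorem hasFDerivAt_quadraticPerturbation (z : ℂ) :
    HasFDerivAt (quadraticPerturbation L)
      (L + Complex.ofRealCLM.comp ((1 / 2 : ℝ) • innerSL ℝ z)) z := by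
  have hasFDerivAt_norm_sq_div :
      HasFDerivAt (fun w : ℂ => ‖w‖ ^ 2 / 4) ((1 / 2 : ℝ) • innerSL ℝ z) z := by
    simp only [div_eq_inv_mul _ (4 : ℝ)]
    refine ((hasStrictFDerivAt_norm_sq z).hasFDerivAt.const_mul (4⁻¹ : ℝ)).congr_fderiv ?_
    rw [← Nat.cast_smul_eq_nsmul ℝ, smul_smul]
    norm_num
  exact L.hasFDerivAt.add (Complex.ofRealCLM.hasFDerivAt.comp z hasFDerivAt_norm_sq_div)

theorem fderiv_quadraticPerturbation_apply (z v : ℂ) :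
    fderiv ℝ (quadraticPerturbation L) z v = L v + ((inner ℝ z v / 2 : ℝ) : ℂ) := by
  rw [(hasFDerivAt_quadraticPerturbation L z).fderiv]
  simp [div_eq_inv_mul, mul_add]

theorem fderiv_quadraticPerturbation_zero : fderiv ℝ (quadraticPerturbation L) 0 = L := by
  ext v
  simp [fderiv_quadraticPerturbation_apply]

theorem fderiv_fderiv_quadraticPerturbation_apply (z u v : ℂ) :
    fderiv ℝ (fun w => fderiv ℝ (quadraticPerturbation L) w v) z u =
      ((inner ℝ v u / 2 : ℝ) : ℂ) := by
  have partial_eq : (fun w => fderiv ℝ (quadraticPerturbation L) w v) =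
      fun w => L v + Complex.ofRealCLM.comp ((1 / 2 : ℝ) • innerSL ℝ v) w := by
    ext1 w
    rw [fderiv_quadraticPerturbation_apply, real_inner_comm]
    simp [div_eq_inv_mul, mul_add]
  rw [partial_eq, fderiv_const_add, ContinuousLinearMap.fderiv]
  simp [div_eq_inv_mul, mul_add]

theorem lap_quadraticPerturbation (z : ℂ) : lap (quadraticPerturbation L) z = 1 := by
  rw [lap, fderiv_fderiv_quadraticPerturbation_apply, fderiv_fderiv_quadraticPerturbation_apply,
    real_inner_self_eq_norm_sq, real_inner_self_eq_norm_sq, norm_one, Complex.norm_I]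
  norm_num

end QuadraticPerturbation

/-- The real-linear map `x + iy ↦ ax + iby`, the linear part of `f_k` when `a = k`, `b = 1/k`. -/
def stretch (a b : ℝ) : ℂ →L[ℝ] ℂ :=
  Complex.ofRealCLM.comp (a • Complex.reCLM) +
    Complex.I • Complex.ofRealCLM.comp (b • Complex.imCLM)

section Stretch

variable (a b : ℝ) (z : ℂ)

@[simp]
theorem stretch_re : (stretch a b z).re = a * z.re := by
  simp [stretch]

@[simp]
theorem stretch_im : (stretch a b z).im = b * z.im := by
  simp [stretch]

theorem det_stretch : (stretch a b).det = a * b := by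
  simp [det_eq_re_mul_im_sub]

theorem quadraticPerturbation_stretch_re :
    (quadraticPerturbation (stretch a b) z).re = a * z.re + (z.re ^ 2 + z.im ^ 2) / 4 := by
  rw [quadraticPerturbation, Complex.add_re, Complex.ofReal_re, stretch_re, Complex.sq_norm,
    Complex.normSq_apply]
  ring

theorem quadraticPerturbation_stretch_im :
    (quadraticPerturbation (stretch a b) z).im = b * z.im := by
  rw [quadraticPerturbation, Complex.add_im, Complex.ofReal_im, stretch_im, add_zero]

end Stretch

theorem injOn_quadraticPerturbation_stretch (a : ℝ) {b : ℝ} (hb : b ≠ 0) :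
    InjOn (quadraticPerturbation (stretch a b)) {z | -2 * a < z.re} := by
  intro z (hz : -2 * a < z.re) w (hw : -2 * a < w.re) h
  have re_eq := congrArg Complex.re h
  have im_eq := congrArg Complex.im h
  rw [quadraticPerturbation_stretch_re, quadraticPerturbation_stretch_re] at re_eq
  rw [quadraticPerturbation_stretch_im, quadraticPerturbation_stretch_im] at im_eq
  have same_im : z.im = w.im := mul_left_cancel₀ hb im_eq
  rw [same_im] at re_eq
  have factored : (z.re - w.re) * (a + (z.re + w.re) / 4) = 0 := by linarith
  have factor_pos : 0 < a + (z.re + w.re) / 4 := by linarith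
  have same_re : z.re = w.re :=
    sub_eq_zero.1 ((mul_eq_zero.1 factored).resolve_right factor_pos.ne')
  exact Complex.ext same_re same_im

theorem injOn_ball_quadraticPerturbation_stretch {a b r : ℝ} (hb : b ≠ 0) (hr : r ≤ 2 * a) :
    InjOn (quadraticPerturbation (stretch a b)) (ball 0 r) := by
  refine (injOn_quadraticPerturbation_stretch a hb).mono fun z hz => ?_
  have re_bounds := abs_lt.1 ((Complex.abs_re_le_norm z).trans_lt (mem_ball_zero_iff.1 hz))
  rw [mem_ofPred_eq]
  linarith

theorem image_ball_quadraticPerturbation_stretch_subset (a b r : ℝ) :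
    quadraticPerturbation (stretch a b) '' ball 0 r ⊆ {w | |w.im| ≤ |b| * r} := by
  rintro _ ⟨z, hz, rfl⟩
  rw [mem_ball_zero_iff] at hz
  rw [mem_ofPred_eq, quadraticPerturbation_stretch_im, abs_mul]
  gcongr
  exact (Complex.abs_im_le_norm z).trans hz.le

theorem radius_le_of_ball_subset_strip {ρ c : ℝ} (hc : 0 ≤ c)
    (h : ball (0 : ℂ) ρ ⊆ {w | |w.im| ≤ c}) : ρ ≤ c := by
  by_contra! hcρ
  obtain ⟨t, hct, htρ⟩ := exists_between hcρ
  have ht : 0 ≤ t := hc.trans hct.le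
  have mem_ball : (t : ℂ) * Complex.I ∈ ball (0 : ℂ) ρ := by
    simpa [abs_of_nonneg ht] using htρ
  have abs_im_le : |((t : ℂ) * Complex.I).im| ≤ c := h mem_ball
  rw [Complex.im_ofReal_mul, Complex.I_im, mul_one, abs_of_nonneg ht] at abs_im_le
  exact abs_im_le.not_gt hct

/-- Example 1.9: the mappings `f_k(x+iy) = kx + |x+iy|²/4 + iy/k` solve `Δf = 1` and show
the failure of a uniform Landau type theorem. -/
theorem stmt18 (f : ℕ → ℂ → ℂ)
    (hf : ∀ k : ℕ, ∀ z : ℂ,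
      f k z = (k : ℂ) * (z.re : ℂ) + ((‖z‖ ^ 2 / 4 : ℝ) : ℂ) +
        Complex.I * ((z.im : ℝ) / k : ℝ)) :
    (∀ k : ℕ, 0 < k →
      (∀ z ∈ ball (0:ℂ) 1, lap (f k) z = 1) ∧
      Set.InjOn (f k) (ball (0:ℂ) 1) ∧
      f k 0 = 0 ∧
      ‖wdz (f k) 0‖ ^ 2 - ‖wdzbar (f k) 0‖ ^ 2 = 1) ∧
    ¬ ∃ ρ₀ : ℝ, 0 < ρ₀ ∧ ∀ k : ℕ, 0 < k → ball (0:ℂ) ρ₀ ⊆ f k '' ball (0:ℂ) 1 := by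
  have f_eq (k : ℕ) : f k = quadraticPerturbation (stretch k (k : ℝ)⁻¹) := by
    ext1 z
    rw [hf, quadraticPerturbation, stretch]
    simp [div_eq_inv_mul, add_right_comm]
  refine ⟨fun k hk => ?_, ?_⟩
  · have one_le : (1 : ℝ) ≤ k := mod_cast hk
    have ne_zero : (k : ℝ) ≠ 0 := by positivity
    rw [f_eq]
    refine ⟨fun z _ => lap_quadraticPerturbation _ z,
      injOn_ball_quadraticPerturbation_stretch (inv_ne_zero ne_zero) (by linarith),
      quadraticPerturbation_zero _, ?_⟩
    rw [norm_wdz_sq_sub_norm_wdzbar_sq, fderiv_quadraticPerturbation_zero, det_stretch,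
      mul_inv_cancel₀ ne_zero]
  · rintro ⟨ρ, hρ, covers⟩
    obtain ⟨n, hn⟩ := exists_nat_one_div_lt hρ
    have subset_image := covers (n + 1) n.succ_pos
    rw [f_eq] at subset_image
    have radius_le := radius_le_of_ball_subset_strip (by positivity)
      (subset_image.trans (image_ball_quadraticPerturbation_stretch_subset _ _ 1))
    rw [mul_one, abs_of_nonneg (by positivity), Nat.cast_succ, ← one_div] at radius_le
    exact radius_le.not_gt hn
end
end
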